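/- arXiv:2603.14516 — 6 statements merged into one kernel-verified Lean document; each statement's English description precedes it below -/
import Mathlib

section
/- Let G be a finite simple undirected connected graph with node set {1,…,n} and edge set of cardinality p, and let D ∈ ℝ^{n×p} be an oriented incidence matrix of G. Let Θ = diag(θ₁,…,θₙ) and Σ = diag(σ₁,…,σ_p) be real diagonal matrices. Suppose there exist positive reals s₁,…,s_p such that for every edge k, with positive end node i and negative end node j, the strict inequality s_k(θ_i + θ_j + σ_k) > Σ_{l≠k, l∈L_i^±} s_l|θ_i| + Σ_{l≠k, l∈L_j^±} s_l|θ_j| holds. Then the matrix M := DᵀΘD + Σ is positive definite. -/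
/-!
Since `M = DᵀΘD + Σ` is symmetric, it suffices that it is diagonally dominant after rescaling its
columns by the weights `s`: `∑_{l ≠ k} s_l |M_kl| < s_k M_kk`. Substituting `x_k = s_k y_k`, each
off-diagonal term of the quadratic form is at least `-½ s_k s_l |M_kl| (y_k² + y_l²)`, so the form is
bounded below by `∑_k s_k y_k² (s_k M_kk - ∑_{l ≠ k} s_l |M_kl|) > 0` (`pos_of_weighted_dominant`).

The hypothesis on the graph gives this dominance: `M_kk = θ_i + θ_j + σ_k` for an edge `k` with
positive end `i` and negative end `j`, while for `l ≠ k` the entry `M_kl = θ_i d_il - θ_j d_jl` has absolute value at most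
`|θ_i| [l ∈ L_i^±] + |θ_j| [l ∈ L_j^±]`.
-/

open Matrix

/-- A finite simple undirected graph with an orientation assigned to each edge:
`pEnd e` is the positive end node of edge `e` and `nEnd e` its negative end node. -/
structure OGraph (V : Type*) (E : Type*) where
  pEnd : E → V
  nEnd : E → V
  ends_ne : ∀ e, pEnd e ≠ nEnd e
  simple : ∀ e f, e ≠ f → ({pEnd e, nEnd e} : Set V) ≠ {pEnd f, nEnd f}

/-- The oriented incidence matrix: entry `(i, e)` is `+1` if `i` is the positive end of `e`,
`-1` if `i` is the negative end, and `0` otherwise. -/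
def OGraph.incMatrix {V E : Type*} [DecidableEq V] (G : OGraph V E) : Matrix V E ℝ :=
  Matrix.of fun i e => if G.pEnd e = i then 1 else if G.nEnd e = i then -1 else 0

/-- The set `L_i^± = L_i^+ ∪ L_i^-` of edges incident to node `i`. -/
def OGraph.incident {V E : Type*} [DecidableEq V] [Fintype E]
    (G : OGraph V E) (i : V) : Finset E :=
  Finset.univ.filter fun e => G.pEnd e = i ∨ G.nEnd e = i

/-- The underlying simple graph of an oriented graph. -/
def OGraph.toSimpleGraph {V E : Type*} (G : OGraph V E) : SimpleGraph V :=
  SimpleGraph.fromRel fun i j => ∃ e, G.pEnd e = i ∧ G.nEnd e = j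

/-- A real symmetric matrix that becomes strictly diagonally dominant, with positive diagonal, after
scaling its columns by positive weights has a positive quadratic form. -/
lemma pos_of_weighted_dominant {ι : Type*} [Fintype ι] [DecidableEq ι] (A : Matrix ι ι ℝ)
    (hA : ∀ k l, A k l = A l k) (s : ι → ℝ) (hs : ∀ k, 0 < s k)
    (hdom : ∀ k, ∑ l ∈ Finset.univ.erase k, s l * |A k l| < s k * A k k)
    (x : ι → ℝ) (hx : x ≠ 0) : 0 < x ⬝ᵥ (A.mulVec x) := by
  obtain ⟨y, rfl⟩ : ∃ y : ι → ℝ, x = fun k => s k * y k :=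
    ⟨fun k => x k / s k, funext fun k => by have := (hs k).ne'; field_simp⟩
  -- the comparison matrix of `A`
  let B : ι → ι → ℝ := fun k l => if k = l then A k k else -|A k l|
  have hBsymm : ∀ k l, B k l = B l k := by
    intro k l
    by_cases h : k = l
    · rw [h]
    · simp [B, h, Ne.symm h, hA k l]
  have hrow : ∀ k, 0 < ∑ l, B k l * s l := by
    intro k
    rw [← Finset.add_sum_erase _ _ (Finset.mem_univ k)]
    have h : ∑ l ∈ Finset.univ.erase k, B k l * s l
        = -∑ l ∈ Finset.univ.erase k, s l * |A k l| := by
      rw [← Finset.sum_neg_distrib]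
      refine Finset.sum_congr rfl fun l hl => ?_
      simp only [B, if_neg (Finset.ne_of_mem_erase hl).symm]
      ring
    have hk : B k k * s k = s k * A k k := by simp [B, mul_comm]
    rw [h, hk]
    linarith [hdom k]
  have hterm : ∀ k l, B k l * (s k * s l) * (y k ^ 2 + y l ^ 2) / 2
      ≤ s k * y k * (A k l * (s l * y l)) := by
    intro k l
    have hss : 0 < s k * s l := mul_pos (hs k) (hs l)
    by_cases h : k = l
    · subst h
      simp only [B, if_true]
      exact le_of_eq (by ring)
    · have h1 : -|A k l| * (y k ^ 2 + y l ^ 2) / 2 ≤ A k l * (y k * y l) := by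
        have h2 := neg_abs_le (A k l)
        have h3 := le_abs_self (A k l)
        nlinarith [mul_nonneg (by linarith : 0 ≤ |A k l| + A k l) (sq_nonneg (y k + y l)),
          mul_nonneg (by linarith : 0 ≤ |A k l| - A k l) (sq_nonneg (y k - y l))]
      simp only [B, if_neg h]
      nlinarith [mul_le_mul_of_nonneg_left h1 hss.le]
  have hsum : ∑ k, ∑ l, B k l * (s k * s l) * (y k ^ 2 + y l ^ 2) / 2
      = ∑ k, s k * y k ^ 2 * ∑ l, B k l * s l := by
    have h1 : ∑ k, ∑ l, B k l * (s k * s l) * y l ^ 2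
        = ∑ k, ∑ l, B k l * (s k * s l) * y k ^ 2 := by
      rw [Finset.sum_comm]
      refine Finset.sum_congr rfl fun k _ => Finset.sum_congr rfl fun l _ => ?_
      rw [hBsymm l k]
      ring
    have h2 : ∑ k, s k * y k ^ 2 * ∑ l, B k l * s l
        = ∑ k, ∑ l, B k l * (s k * s l) * y k ^ 2 := by
      refine Finset.sum_congr rfl fun k _ => ?_
      rw [Finset.mul_sum]
      exact Finset.sum_congr rfl fun l _ => by ring
    rw [h2]
    simp only [mul_add, add_div, Finset.sum_add_distrib, ← Finset.sum_div]
    rw [h1]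
    ring
  have hpos : 0 < ∑ k, s k * y k ^ 2 * ∑ l, B k l * s l := by
    obtain ⟨k, hk⟩ := Function.ne_iff.mp hx
    have hy : y k ≠ 0 := fun h => hk (by simp [h])
    refine Finset.sum_pos' (fun j _ => ?_) ⟨k, Finset.mem_univ k, ?_⟩
    · exact mul_nonneg (mul_nonneg (hs j).le (sq_nonneg _)) (hrow j).le
    · exact mul_pos (mul_pos (hs k) (by positivity)) (hrow k)
  rw [← hsum] at hpos
  refine hpos.trans_le ?_
  simp only [dotProduct, Matrix.mulVec, Finset.mul_sum]
  exact Finset.sum_le_sum fun k _ => Finset.sum_le_sum fun l _ => hterm k l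

/-- Pairing a column of the incidence matrix with a node function gives the difference of its values
at the two ends of the edge. -/
lemma OGraph.sum_incMatrix_mul {V E : Type*} [Fintype V] [DecidableEq V] (G : OGraph V E) (k : E)
    (f : V → ℝ) : ∑ i, G.incMatrix i k * f i = f (G.pEnd k) - f (G.nEnd k) := by
  have h : ∀ i, G.incMatrix i k * f i
      = (if G.pEnd k = i then f i else 0) - (if G.nEnd k = i then f i else 0) := by
    intro i
    have := G.ends_ne k
    simp only [OGraph.incMatrix, Matrix.of_apply]
    grind
  simp [h, Finset.sum_sub_distrib]

lemma OGraph.abs_incMatrix {V E : Type*} [DecidableEq V] [Fintype E] [DecidableEq E]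
    (G : OGraph V E) (i : V) (l : E) :
    |G.incMatrix i l| = if l ∈ G.incident i then 1 else 0 := by
  simp only [OGraph.incMatrix, Matrix.of_apply, OGraph.incident, Finset.mem_filter,
    Finset.mem_univ, true_and]
  split_ifs <;> simp_all

/-- Lemma 1: if there are positive weights `s k` such that for every edge `k`
with positive end `i = pEnd k` and negative end `j = nEnd k`,
`s_k (θ_i + θ_j + σ_k) > ∑_{l ≠ k, l ∈ L_i^±} s_l |θ_i| + ∑_{l ≠ k, l ∈ L_j^±} s_l |θ_j|`,
then `M = DᵀΘD + Σ` is positive definite. -/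
theorem stmt0 {n p : ℕ} (G : OGraph (Fin n) (Fin p))
    (hconn : G.toSimpleGraph.Connected)
    (θ : Fin n → ℝ) (σ : Fin p → ℝ)
    (s : Fin p → ℝ) (hs : ∀ k, 0 < s k)
    (hdom : ∀ k : Fin p,
      (∑ l ∈ (G.incident (G.pEnd k)).erase k, s l * |θ (G.pEnd k)|) +
        (∑ l ∈ (G.incident (G.nEnd k)).erase k, s l * |θ (G.nEnd k)|) <
      s k * (θ (G.pEnd k) + θ (G.nEnd k) + σ k)) :
    ∀ x : Fin p → ℝ, x ≠ 0 →
      0 < x ⬝ᵥ (((G.incMatrix)ᵀ * Matrix.diagonal θ * G.incMatrix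
          + Matrix.diagonal σ).mulVec x) := by
  have hentry : ∀ k l, ((G.incMatrix)ᵀ * Matrix.diagonal θ * G.incMatrix
      + Matrix.diagonal σ) k l = θ (G.pEnd k) * G.incMatrix (G.pEnd k) l
        - θ (G.nEnd k) * G.incMatrix (G.nEnd k) l + if k = l then σ k else 0 := by
    intro k l
    rw [← G.sum_incMatrix_mul k fun i => θ i * G.incMatrix i l, Matrix.add_apply,
      Matrix.mul_apply, Matrix.diagonal_apply]
    simp only [Matrix.mul_diagonal, Matrix.transpose_apply, mul_assoc]
  have hsymm : ((G.incMatrix)ᵀ * Matrix.diagonal θ * G.incMatrix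
      + Matrix.diagonal σ)ᵀ = (G.incMatrix)ᵀ * Matrix.diagonal θ * G.incMatrix
      + Matrix.diagonal σ := by
    simp [Matrix.transpose_mul, Matrix.mul_assoc]
  refine pos_of_weighted_dominant _ (fun k l => congrFun (congrFun hsymm.symm k) l) s hs fun k => ?_
  have hdiag : ((G.incMatrix)ᵀ * Matrix.diagonal θ * G.incMatrix + Matrix.diagonal σ) k k
      = θ (G.pEnd k) + θ (G.nEnd k) + σ k := by
    rw [hentry]
    simp [OGraph.incMatrix, G.ends_ne k]
  have hnode : ∀ i, ∑ l ∈ (G.incident i).erase k, s l * |θ i|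
      = ∑ l ∈ Finset.univ.erase k, s l * (|θ i| * |G.incMatrix i l|) := by
    intro i
    have h : (G.incident i).erase k = (Finset.univ.erase k).filter (· ∈ G.incident i) := by
      ext l; simp
    rw [h, Finset.sum_filter]
    refine Finset.sum_congr rfl fun l _ => ?_
    rw [G.abs_incMatrix]
    split_ifs <;> simp
  rw [hdiag]
  refine lt_of_le_of_lt ?_ (hdom k)
  rw [hnode, hnode, ← Finset.sum_add_distrib]
  refine Finset.sum_le_sum fun l hl => ?_
  rw [hentry, if_neg (Finset.ne_of_mem_erase hl).symm, add_zero, ← mul_add, ← abs_mul, ← abs_mul]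
  exact mul_le_mul_of_nonneg_left (abs_sub _ _) (hs l).le
end

section
/- Let G be a finite simple undirected connected graph with node set {1,…,n} and edge set of cardinality p, and let D ∈ ℝ^{n×p} be an oriented incidence matrix of G. Let ν₁,…,νₙ be real numbers and let Ψ = diag(ν₁,…,νₙ). For each edge k, with positive end node i and negative end node j, let ᾱ_k > 0 and set Λ = diag(1/ᾱ₁,…,1/ᾱ_p). Suppose that for every edge k with end nodes i and j, the inequality 1/ᾱ_k + ν_i + ν_j − (r_i − 1)|ν_i| − (r_j − 1)|ν_j| > 0 holds, where r_i and r_j are the degrees of nodes i and j in G. Then the matrix DᵀΨD + Λ is positive definite. -/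
/-!
The quadratic form is `∑ i, ν i * (D x)_i ^ 2 + ∑ k, x_k ^ 2 / ᾱ_k`. At a node `i` of degree `r`,
`(D x)_i` is a signed sum of the `r` entries of `x` on the incident edges, and
`ν * (∑ y) ^ 2 ≥ (ν - (r - 1) * |ν|) * ∑ y ^ 2` (`node_bound`): for `ν < 0` this is Cauchy–Schwarz, and
for `ν ≥ 0` the coefficient on the right is `(2 - r) * ν`, which is nonpositive unless `r ≤ 1`.
Summing over nodes, each edge collects the coefficients of its two ends (`OGraph.sum_mul_incMatrix_sq`),
so the form is at least `∑ k, (edge quantity)_k * x_k ^ 2`, which is positive for `x ≠ 0`.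
-/

open Matrix

lemma node_bound {E : Type*} (s : Finset E) (y : E → ℝ) (ν : ℝ) :
    (ν - ((s.card : ℝ) - 1) * |ν|) * ∑ k ∈ s, y k ^ 2 ≤ ν * (∑ k ∈ s, y k) ^ 2 := by
  have hS : 0 ≤ ∑ k ∈ s, y k ^ 2 := Finset.sum_nonneg fun k _ => sq_nonneg _
  have hCS : (∑ k ∈ s, y k) ^ 2 ≤ s.card * ∑ k ∈ s, y k ^ 2 := sq_sum_le_card_mul_sum_sq
  rcases le_or_gt 0 ν with hν | hν
  · rw [abs_of_nonneg hν]
    rcases lt_trichotomy s.card 1 with h | h | h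
    · have : s = ∅ := Finset.card_eq_zero.mp (by omega)
      simp [this]
    · obtain ⟨a, rfl⟩ := Finset.card_eq_one.mp h
      simp
    · have h2 : (2 : ℝ) ≤ s.card := by exact_mod_cast h
      have hR : 0 ≤ ν * (∑ k ∈ s, y k) ^ 2 := mul_nonneg hν (sq_nonneg _)
      have hL : 0 ≤ ((s.card : ℝ) - 2) * ν * ∑ k ∈ s, y k ^ 2 :=
        mul_nonneg (mul_nonneg (by linarith) hν) hS
      linarith
  · rw [abs_of_neg hν]
    have := mul_le_mul_of_nonpos_left hCS hν.le
    linarith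

lemma OGraph.incMatrix_sq {V E : Type*} [DecidableEq V] (G : OGraph V E) (i : V) (k : E) :
    G.incMatrix i k ^ 2 = (if G.pEnd k = i then 1 else 0) + (if G.nEnd k = i then 1 else 0) := by
  have h := G.ends_ne k
  simp only [OGraph.incMatrix, Matrix.of_apply]
  split_ifs with h1 h2
  · exact absurd (h1.trans h2.symm) h
  all_goals norm_num

lemma OGraph.sum_mul_incMatrix_sq {V E : Type*} [Fintype V] [DecidableEq V] (G : OGraph V E)
    (c : V → ℝ) (k : E) :
    ∑ i, c i * G.incMatrix i k ^ 2 = c (G.pEnd k) + c (G.nEnd k) := by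
  simp [G.incMatrix_sq, mul_add, Finset.sum_add_distrib]

lemma OGraph.node_bound_incMatrix {V E : Type*} [DecidableEq V] [Fintype E] (G : OGraph V E)
    (x : E → ℝ) (ν : ℝ) (i : V) :
    (ν - (((G.incident i).card : ℝ) - 1) * |ν|) * ∑ k, G.incMatrix i k ^ 2 * x k ^ 2
      ≤ ν * (∑ k, G.incMatrix i k * x k) ^ 2 := by
  have hzero : ∀ k, k ∉ G.incident i → G.incMatrix i k = 0 := by
    intro k hk
    simp only [OGraph.incident, Finset.mem_filter, Finset.mem_univ, true_and, not_or] at hk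
    simp [OGraph.incMatrix, hk.1, hk.2]
  have h1 : ∑ k, G.incMatrix i k * x k = ∑ k ∈ G.incident i, G.incMatrix i k * x k :=
    (Finset.sum_subset (Finset.subset_univ _) fun k _ hk => by simp [hzero k hk]).symm
  have h2 : ∑ k, G.incMatrix i k ^ 2 * x k ^ 2
      = ∑ k ∈ G.incident i, (G.incMatrix i k * x k) ^ 2 := by
    simp only [mul_pow]
    exact (Finset.sum_subset (Finset.subset_univ _) fun k _ hk => by simp [hzero k hk]).symm
  rw [h1, h2]
  exact node_bound _ _ _

lemma quadForm_eq {V E : Type*} [Fintype V] [DecidableEq V] [Fintype E] [DecidableEq E]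
    (D : Matrix V E ℝ) (ν : V → ℝ) (l x : E → ℝ) :
    x ⬝ᵥ ((Dᵀ * Matrix.diagonal ν * D + Matrix.diagonal l).mulVec x)
      = ∑ i, ν i * (∑ k, D i k * x k) ^ 2 + ∑ k, l k * x k ^ 2 := by
  rw [Matrix.add_mulVec, dotProduct_add, ← Matrix.mulVec_mulVec, ← Matrix.mulVec_mulVec,
    Matrix.dotProduct_mulVec, Matrix.vecMul_transpose]
  congr 1
  · simp only [dotProduct, Matrix.mulVec_diagonal]
    exact Finset.sum_congr rfl fun i _ => by simp only [Matrix.mulVec, dotProduct]; ring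
  · simp only [dotProduct, Matrix.mulVec_diagonal]
    exact Finset.sum_congr rfl fun i _ => by ring

/-- if for every edge `k` with end nodes `i, j` one has
`1/ᾱ_k + ν_i + ν_j - (r_i - 1)|ν_i| - (r_j - 1)|ν_j| > 0`, then
`DᵀΨD + Λ` is positive definite, where `Ψ = diag(ν)` and `Λ = diag(1/ᾱ)`. -/
theorem stmt3 {n p : ℕ} (G : OGraph (Fin n) (Fin p))
    (hconn : G.toSimpleGraph.Connected)
    (ν : Fin n → ℝ) (αhi : Fin p → ℝ) (hαhi : ∀ k, 0 < αhi k)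
    (hedge : ∀ k : Fin p,
      0 < 1 / αhi k + ν (G.pEnd k) + ν (G.nEnd k)
        - (((G.incident (G.pEnd k)).card : ℝ) - 1) * |ν (G.pEnd k)|
        - (((G.incident (G.nEnd k)).card : ℝ) - 1) * |ν (G.nEnd k)|) :
    ∀ x : Fin p → ℝ, x ≠ 0 →
      0 < x ⬝ᵥ (((G.incMatrix)ᵀ * Matrix.diagonal ν * G.incMatrix
          + Matrix.diagonal fun k => 1 / αhi k).mulVec x) := by
  intro x hx
  rw [quadForm_eq]
  set c : Fin n → ℝ := fun i => ν i - (((G.incident i).card : ℝ) - 1) * |ν i| with hc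
  have hnode : ∑ i, c i * ∑ k, G.incMatrix i k ^ 2 * x k ^ 2
      ≤ ∑ i, ν i * (∑ k, G.incMatrix i k * x k) ^ 2 :=
    Finset.sum_le_sum fun i _ => G.node_bound_incMatrix x (ν i) i
  have hswap : ∑ i, c i * ∑ k, G.incMatrix i k ^ 2 * x k ^ 2
      = ∑ k, (c (G.pEnd k) + c (G.nEnd k)) * x k ^ 2 := by
    simp only [Finset.mul_sum, ← G.sum_mul_incMatrix_sq c, Finset.sum_mul]
    rw [Finset.sum_comm]
    simp only [mul_assoc]
  have hcoef : ∀ k, 0 < c (G.pEnd k) + c (G.nEnd k) + 1 / αhi k := fun k => by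
    have := hedge k
    simp only [hc]
    linarith
  have hpos : 0 < ∑ k, (c (G.pEnd k) + c (G.nEnd k) + 1 / αhi k) * x k ^ 2 := by
    obtain ⟨k, hk⟩ := Function.ne_iff.mp hx
    exact Finset.sum_pos' (fun k _ => mul_nonneg (hcoef k).le (sq_nonneg _))
      ⟨k, Finset.mem_univ k, mul_pos (hcoef k) (sq_pos_of_ne_zero hk)⟩
  simp only [add_mul _ (1 / αhi _), Finset.sum_add_distrib] at hpos
  linarith
end

section
/- Let G be a finite simple undirected connected graph with node set {1,…,n} and edge set of cardinality p, and let D ∈ ℝ^{n×p} be an oriented incidence matrix of G. For each edge k, let φ_k : ℝ → ℝ be Borel measurable and sector bounded with bounds 0 < α_k ≤ ᾱ_k. Let y_i, w_i : [0,∞) → ℝ (i = 1,…,n) be locally square-integrable, set Y = (y₁,…,yₙ)ᵀ, W = (w₁,…,wₙ)ᵀ, define V : [0,∞) → ℝ^p pointwise by V(t) = Φ(Dᵀ(Y(t)+W(t))) where Φ applies φ_k to the k-th component, and define U : [0,∞) → ℝⁿ by U(t) = −D V(t). Suppose there exist ν₁,…,νₙ ∈ ℝ and δ₁,…,δₙ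 ∈ ℝ such that for every i and every T ≥ 0, ∫₀ᵀ u_i(t) y_i(t) dt ≥ ν_i ∫₀ᵀ u_i(t)² dt + δ_i. Let Ψ = diag(ν₁,…,νₙ) and Λ = diag(1/ᾱ₁,…,1/ᾱ_p). Then for every T ≥ 0, ∫₀ᵀ V(t)ᵀ Dᵀ W(t) dt ≥ ∫₀ᵀ V(t)ᵀ (DᵀΨD + Λ) V(t) dt + Σᵢ δ_i. -/
/-!
Write `z = Dᵀ(Y + W)`, so that `V_k = φ_k(z_k)`. Since `U = -D V`, one has the pointwise identities
`Vᵀ Dᵀ W = ∑ₖ V_k z_k + ∑ᵢ uᵢ yᵢ` and `Vᵀ (DᵀΨD + Λ) V = ∑ᵢ νᵢ uᵢ² + ∑ₖ V_k² / ᾱ_k`.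
The sector bound gives `V_k² / ᾱ_k ≤ V_k z_k` pointwise (`sector_sq_le`); integrating this and adding
the passivity inequalities over all nodes yields the claim. The sector bound also gives
`|V_k| ≤ ᾱ_k |z_k|` (`sector_abs_le`), so all signals are in `L²(0, T)` and every product that
occurs is integrable, which justifies splitting the integrals.
-/

open Matrix MeasureTheory

lemma sector_abs_le {f : ℝ → ℝ} {a b : ℝ} (ha : 0 < a) (h0 : f 0 = 0)
    (hs : ∀ x : ℝ, x ≠ 0 → a ≤ f x / x ∧ f x / x ≤ b) (x : ℝ) : |f x| ≤ b * |x| := by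
  by_cases hx : x = 0
  · simp [hx, h0]
  · obtain ⟨h1, h2⟩ := hs x hx
    have hfx : f x = f x / x * x := by field_simp
    rw [hfx, abs_mul, abs_of_pos (ha.trans_le h1)]
    gcongr

lemma sector_sq_le {f : ℝ → ℝ} {a b : ℝ} (ha : 0 < a) (hab : a ≤ b) (h0 : f 0 = 0)
    (hs : ∀ x : ℝ, x ≠ 0 → a ≤ f x / x ∧ f x / x ≤ b) (x : ℝ) :
    1 / b * (f x) ^ 2 ≤ f x * x := by
  by_cases hx : x = 0
  · simp [hx, h0]
  · obtain ⟨h1, h2⟩ := hs x hx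
    have hb : 0 < b := ha.trans_le hab
    have hfx : f x = f x / x * x := by field_simp
    generalize f x / x = c at hfx h1 h2
    rw [hfx, one_div, inv_mul_le_iff₀ hb]
    have hc : 0 < c := ha.trans_le h1
    have : 0 ≤ c * x ^ 2 * (b - c) := mul_nonneg (by positivity) (by linarith)
    nlinarith

/-- The quadratic form of `DᵀΨD + Λ`, with `Ψ = diag ν` and `Λ = diag l`, in coordinates. -/
lemma dotProduct_quadForm {n p : ℕ} (D : Matrix (Fin n) (Fin p) ℝ) (ν : Fin n → ℝ)
    (l v : Fin p → ℝ) :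
    v ⬝ᵥ ((Dᵀ * Matrix.diagonal ν * D + Matrix.diagonal l) *ᵥ v)
      = ∑ i, ν i * ((D *ᵥ v) i) ^ 2 + ∑ k, l k * (v k) ^ 2 := by
  rw [Matrix.add_mulVec, dotProduct_add, ← Matrix.mulVec_mulVec, ← Matrix.mulVec_mulVec,
    Matrix.dotProduct_mulVec, Matrix.vecMul_transpose]
  congr 1
  · refine Finset.sum_congr rfl fun i _ => ?_
    rw [Matrix.mulVec_diagonal]; ring
  · refine Finset.sum_congr rfl fun k _ => ?_
    rw [Matrix.mulVec_diagonal]; ring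

/-- The transposed coupling splits as edge supply `vᵀ Dᵀ (y + w)` plus node supply `(-D v)ᵀ y`. -/
lemma dotProduct_transpose_split {n p : ℕ} (D : Matrix (Fin n) (Fin p) ℝ)
    (v : Fin p → ℝ) (y w : Fin n → ℝ) :
    v ⬝ᵥ (Dᵀ *ᵥ w) = ∑ k, v k * (Dᵀ *ᵥ (fun i => y i + w i)) k + ∑ i, (-(D *ᵥ v)) i * y i := by
  change _ = v ⬝ᵥ (Dᵀ *ᵥ (y + w)) + (-(D *ᵥ v)) ⬝ᵥ y
  rw [Matrix.mulVec_add, dotProduct_add, neg_dotProduct, Matrix.dotProduct_mulVec v _ y,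
    Matrix.vecMul_transpose]
  ring

/-- with sector-bounded edge couplings `φ_k`, diffusive couplings
`V(t) = Φ(Dᵀ(Y(t)+W(t)))`, `U(t) = -D V(t)`, and node-wise IFP inequalities
`∫₀ᵀ u_i y_i ≥ ν_i ∫₀ᵀ u_i² + δ_i`, one has for every `T ≥ 0`:
`∫₀ᵀ Vᵀ Dᵀ W dt ≥ ∫₀ᵀ Vᵀ (DᵀΨD + Λ) V dt + ∑ᵢ δᵢ`. -/
theorem stmt7 {n p : ℕ} (G : OGraph (Fin n) (Fin p))
    (hconn : G.toSimpleGraph.Connected)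
    (φ : Fin p → ℝ → ℝ) (hφm : ∀ k, Measurable (φ k))
    (αlo αhi : Fin p → ℝ) (hαlo : ∀ k, 0 < αlo k) (hle : ∀ k, αlo k ≤ αhi k)
    (hφ0 : ∀ k, φ k 0 = 0)
    (hsec : ∀ k, ∀ x : ℝ, x ≠ 0 → αlo k ≤ φ k x / x ∧ φ k x / x ≤ αhi k)
    (Y W : ℝ → Fin n → ℝ)
    (hYm : ∀ i, Measurable fun t => Y t i) (hWm : ∀ i, Measurable fun t => W t i)
    (hY2 : ∀ i, ∀ T : ℝ, 0 ≤ T → IntegrableOn (fun t => (Y t i) ^ 2) (Set.Ioc 0 T))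
    (hW2 : ∀ i, ∀ T : ℝ, 0 ≤ T → IntegrableOn (fun t => (W t i) ^ 2) (Set.Ioc 0 T))
    (V : ℝ → Fin p → ℝ)
    (hV : ∀ t k, V t k = φ k ((G.incMatrix)ᵀ.mulVec (fun i => Y t i + W t i) k))
    (U : ℝ → Fin n → ℝ)
    (hU : ∀ t, U t = -(G.incMatrix.mulVec (V t)))
    (ν δ : Fin n → ℝ)
    (hIFP : ∀ i, ∀ T : ℝ, 0 ≤ T →
      ν i * (∫ t in (0:ℝ)..T, (U t i) ^ 2) + δ i ≤ ∫ t in (0:ℝ)..T, U t i * Y t i)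
    (T : ℝ) (hT : 0 ≤ T) :
    (∫ t in (0:ℝ)..T, V t ⬝ᵥ (((G.incMatrix)ᵀ * Matrix.diagonal ν * G.incMatrix
          + Matrix.diagonal fun k => 1 / αhi k).mulVec (V t))) + ∑ i, δ i
      ≤ ∫ t in (0:ℝ)..T, V t ⬝ᵥ ((G.incMatrix)ᵀ.mulVec (W t)) := by
  set D := G.incMatrix with hD
  set z : ℝ → Fin p → ℝ := fun t => Dᵀ *ᵥ (fun i => Y t i + W t i) with hz
  set μ := volume.restrict (Set.Ioc (0:ℝ) T) with hμ
  have hYL : ∀ i, MemLp (fun t => Y t i) 2 μ := fun i =>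
    (memLp_two_iff_integrable_sq (hYm i).aestronglyMeasurable).2 (hY2 i T hT)
  have hWL : ∀ i, MemLp (fun t => W t i) 2 μ := fun i =>
    (memLp_two_iff_integrable_sq (hWm i).aestronglyMeasurable).2 (hW2 i T hT)
  have hzm : ∀ k, Measurable fun t => z t k := by
    intro k
    simp only [hz, Matrix.mulVec, dotProduct]
    exact Finset.measurable_sum _ fun i _ => ((hYm i).add (hWm i)).const_mul _
  have hzL : ∀ k, MemLp (fun t => z t k) 2 μ := by
    intro k
    simp only [hz, Matrix.mulVec, dotProduct]
    exact memLp_finsetSum _ fun i _ => ((hYL i).add (hWL i)).const_mul _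
  have hVz : ∀ t k, V t k = φ k (z t k) := hV
  have hVL : ∀ k, MemLp (fun t => V t k) 2 μ := by
    intro k
    simp only [hVz]
    refine (hzL k).of_le_mul (c := αhi k) ((hφm k).comp (hzm k)).aestronglyMeasurable ?_
    exact Filter.Eventually.of_forall fun t => sector_abs_le (hαlo k) (hφ0 k) (hsec k) (z t k)
  have hUL : ∀ i, MemLp (fun t => U t i) 2 μ := by
    intro i
    simp only [hU, Pi.neg_apply, Matrix.mulVec, dotProduct]
    exact (memLp_finsetSum _ fun k _ => (hVL k).const_mul _).neg
  have hUU : ∀ i, Integrable (fun t => ν i * (U t i) ^ 2) μ := fun i =>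
    (hUL i).integrable_sq.const_mul _
  have hVV : ∀ k, Integrable (fun t => 1 / αhi k * (V t k) ^ 2) μ := fun k =>
    (hVL k).integrable_sq.const_mul _
  have hVzI : ∀ k, Integrable (fun t => V t k * z t k) μ := fun k =>
    (hVL k).integrable_mul (hzL k)
  have hUY : ∀ i, Integrable (fun t => U t i * Y t i) μ := fun i =>
    (hUL i).integrable_mul (hYL i)
  have e1 : ∀ t, V t ⬝ᵥ ((Dᵀ * Matrix.diagonal ν * D
      + Matrix.diagonal fun k => 1 / αhi k) *ᵥ (V t))
      = ∑ i, ν i * (U t i) ^ 2 + ∑ k, 1 / αhi k * (V t k) ^ 2 := by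
    intro t
    rw [dotProduct_quadForm]
    simp [hU]
  have e2 : ∀ t, V t ⬝ᵥ (Dᵀ *ᵥ (W t)) = ∑ k, V t k * z t k + ∑ i, U t i * Y t i := by
    intro t
    rw [hU t]
    exact dotProduct_transpose_split D (V t) (Y t) (W t)
  simp only [e1, e2]
  have hI := fun i => hIFP i T hT
  simp only [intervalIntegral.integral_of_le hT] at hI ⊢
  rw [integral_add (integrable_finsetSum _ fun i _ => hUU i)
      (integrable_finsetSum _ fun k _ => hVV k),
    integral_add (integrable_finsetSum _ fun k _ => hVzI k)
      (integrable_finsetSum _ fun i _ => hUY i),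
    integral_finsetSum _ fun i _ => hUU i, integral_finsetSum _ fun k _ => hVV k,
    integral_finsetSum _ fun k _ => hVzI k, integral_finsetSum _ fun i _ => hUY i]
  have hnode : ∑ i, ∫ t, ν i * (U t i) ^ 2 ∂μ + ∑ i, δ i ≤ ∑ i, ∫ t, U t i * Y t i ∂μ := by
    rw [← Finset.sum_add_distrib]
    refine Finset.sum_le_sum fun i _ => ?_
    rw [integral_const_mul]
    exact hI i
  have hedge : ∑ k, ∫ t, 1 / αhi k * (V t k) ^ 2 ∂μ ≤ ∑ k, ∫ t, V t k * z t k ∂μ := by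
    refine Finset.sum_le_sum fun k _ => integral_mono (hVV k) (hVzI k) fun t => ?_
    simp only [hVz]
    exact sector_sq_le (hαlo k) (hle k) (hφ0 k) (hsec k) (z t k)
  linarith
end

section
/- Let G be a finite simple undirected connected graph with node set {1,…,n} and edge set of cardinality p, and let D ∈ ℝ^{n×p} be an oriented incidence matrix of G. For each edge k, let φ_k : ℝ → ℝ be Borel measurable and sector bounded with bounds 0 < α_k ≤ ᾱ_k. Let y_i, w_i : [0,∞) → ℝ (i = 1,…,n) be locally square-integrable, set Y = (y₁,…,yₙ)ᵀ, W = (w₁,…,wₙ)ᵀ, define V(t) = Φ(Dᵀ(Y(t)+W(t))) where Φ applies φ_k to the k-th component, and define U(t) = −D V(t) with components u_i. Suppose there exist ν₁,…,νₙ ∈ ℝ and δ₁,…,δₙ ∈ ℝ such that for every i and every T ≥ 0, ∫₀ᵀ u_i(t) y_i(t) dt ≥ ν_i ∫₀ᵀ u_i(t)² dt + δ_i. Suppose that for every edge k with positive end node i and negative end node j, 1/ᾱ_k + ν_i + ν_j − (r_i − 1)|ν_i| − (r_j − 1)|ν_j| > 0, where r_i, r_j are the degrees of nodes i, j in G. Let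 Ψ = diag(ν₁,…,νₙ), Λ = diag(1/ᾱ₁,…,1/ᾱ_p), let κ be the smallest eigenvalue of DᵀΨD + Λ (which is positive), let δ̄ = Σᵢ δ_i and α = min_k α_k. Then for every T ≥ 0, ‖DᵀY‖_T ≤ (1/(κα) + 1) ‖DᵀW‖_T + (1/α) √(2|δ̄|/κ); in particular, the network achieves input–output consensus. -/
/-!
Write `a = ‖V‖_T`, `b = ‖DᵀW‖_T`, `z = Dᵀ(Y + W)`.

*Positivity of `κ`.* At a node `i` with `r_i` incident edges,
`ν_i (Dx)_i² ≥ ∑_{k ∋ i} (ν_i - (r_i - 1)|ν_i|) x_k²` (`node_bound`): for `ν_i ≤ 0` this is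
Cauchy–Schwarz, for `ν_i > 0` it is trivial when `r_i ≥ 2` and an equality when `r_i ≤ 1`.
Summing over nodes and regrouping by edges, the edge condition makes `DᵀΨD + Λ` positive definite.

*The gain bound.* Summing the IFP inequalities over the nodes and using `U = -DV` and
`V_k z_k ≥ V_k² / ᾱ_k` (`pointwise_dissipation`) gives
`κ a² ≤ ∫ Vᵀ(DᵀΨD + Λ)V ≤ ∫ V·DᵀW - δ̄ ≤ a b + |δ̄|`, whence `a ≤ b/κ + √(|δ̄|/κ)`
(`root_bound`). Finally `α ‖z‖_T ≤ a` by the lower sector bound, and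
`‖DᵀY‖_T ≤ ‖z‖_T + b` since `DᵀY = z - DᵀW`.
-/

open Matrix MeasureTheory

/-- The truncated `L²` norm `‖f‖_T = (∫₀ᵀ |f(t)|² dt)^{1/2}` of a vector-valued signal. -/
noncomputable def normT {ι : Type*} [Fintype ι] (f : ℝ → ι → ℝ) (T : ℝ) : ℝ :=
  Real.sqrt (∫ t in (0:ℝ)..T, ∑ k, (f t k) ^ 2)

section L2

variable {ι : Type*} [Fintype ι] {μ : Measure ℝ}

lemma integrable_sum_mul {f g : ℝ → ι → ℝ} (hf : ∀ k, MemLp (fun t => f t k) 2 μ)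
    (hg : ∀ k, MemLp (fun t => g t k) 2 μ) : Integrable (fun t => ∑ k, f t k * g t k) μ :=
  integrable_finsetSum _ fun k _ => (hf k).integrable_mul (hg k)

lemma integrable_sum_sq {f : ℝ → ι → ℝ} (hf : ∀ k, MemLp (fun t => f t k) 2 μ) :
    Integrable (fun t => ∑ k, f t k ^ 2) μ :=
  integrable_finsetSum _ fun k _ => (hf k).integrable_sq

/-- Expansion of `‖s f - g‖²` in `L²(μ; ℝ^ι)`. -/
lemma integral_sq_smul_sub {f g : ℝ → ι → ℝ} (hf : ∀ k, MemLp (fun t => f t k) 2 μ)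
    (hg : ∀ k, MemLp (fun t => g t k) 2 μ) (s : ℝ) :
    ∫ t, ∑ k, (s * f t k - g t k) ^ 2 ∂μ
      = s ^ 2 * (∫ t, ∑ k, f t k ^ 2 ∂μ) - 2 * s * (∫ t, ∑ k, f t k * g t k ∂μ)
        + ∫ t, ∑ k, g t k ^ 2 ∂μ := by
  have h1 := (integrable_sum_sq hf).const_mul (s ^ 2)
  have h2 := (integrable_sum_mul hf hg).const_mul (2 * s)
  have h3 := integrable_sum_sq hg
  have h12 : Integrable
      (fun t => s ^ 2 * ∑ k, f t k ^ 2 - 2 * s * ∑ k, f t k * g t k) μ := h1.sub h2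
  rw [← integral_const_mul, ← integral_const_mul, ← integral_sub h1 h2,
    ← integral_add h12 h3]
  congr 1
  ext t
  simp only [Finset.mul_sum, ← Finset.sum_sub_distrib, ← Finset.sum_add_distrib]
  exact Finset.sum_congr rfl fun k _ => by ring

lemma integral_sum_mul_le {f g : ℝ → ι → ℝ} (hf : ∀ k, MemLp (fun t => f t k) 2 μ)
    (hg : ∀ k, MemLp (fun t => g t k) 2 μ) :
    |∫ t, ∑ k, f t k * g t k ∂μ|
      ≤ √(∫ t, ∑ k, f t k ^ 2 ∂μ) * √(∫ t, ∑ k, g t k ^ 2 ∂μ) := by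
  have hA : 0 ≤ ∫ t, ∑ k, f t k ^ 2 ∂μ := integral_nonneg fun t => by positivity
  have key : ∀ s : ℝ, 0 ≤ (∫ t, ∑ k, f t k ^ 2 ∂μ) * (s * s)
      + (-2 * (∫ t, ∑ k, f t k * g t k ∂μ)) * s + ∫ t, ∑ k, g t k ^ 2 ∂μ := by
    intro s
    have h := integral_sq_smul_sub hf hg s
    have h0 : 0 ≤ ∫ t, ∑ k, (s * f t k - g t k) ^ 2 ∂μ :=
      integral_nonneg fun t => by positivity
    linarith
  have hd := discrim_le_zero key
  rw [← Real.sqrt_mul hA]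
  apply Real.abs_le_sqrt
  unfold discrim at hd
  linarith

lemma sqrt_integral_sub_le {f g : ℝ → ι → ℝ} (hf : ∀ k, MemLp (fun t => f t k) 2 μ)
    (hg : ∀ k, MemLp (fun t => g t k) 2 μ) :
    √(∫ t, ∑ k, (f t k - g t k) ^ 2 ∂μ)
      ≤ √(∫ t, ∑ k, f t k ^ 2 ∂μ) + √(∫ t, ∑ k, g t k ^ 2 ∂μ) := by
  have hA : 0 ≤ ∫ t, ∑ k, f t k ^ 2 ∂μ := integral_nonneg fun t => by positivity
  have hC : 0 ≤ ∫ t, ∑ k, g t k ^ 2 ∂μ := integral_nonneg fun t => by positivity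
  have h := integral_sq_smul_sub hf hg 1
  simp only [one_mul] at h
  apply Real.sqrt_le_iff.2 ⟨by positivity, ?_⟩
  have hcs := (abs_le.1 (integral_sum_mul_le hf hg)).1
  nlinarith [Real.sq_sqrt hA, Real.sq_sqrt hC]

end L2

lemma root_bound {κ a b c : ℝ} (hκ : 0 < κ) (hb : 0 ≤ b) (hc : 0 ≤ c)
    (h : κ * a ^ 2 ≤ a * b + c) : a ≤ b / κ + √(c / κ) := by
  by_contra! hlt
  have hs : 0 ≤ √(c / κ) := Real.sqrt_nonneg _
  have hs2 : κ * √(c / κ) ^ 2 = c := by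
    rw [Real.sq_sqrt (by positivity)]; field_simp
  have hbk : κ * (b / κ) = b := by field_simp
  have hbk0 : 0 ≤ b / κ := by positivity
  generalize √(c / κ) = s at *
  generalize b / κ = q at *
  subst hbk
  have h1 : 0 < a := by linarith
  -- `a (a - q) > a s ≥ s²`
  have h2 : a * s < a * (a - q) := mul_lt_mul_of_pos_left (by linarith) h1
  have h3 : s * s ≤ a * s := mul_le_mul_of_nonneg_right (by linarith) hs
  have h4 : κ * (s * s) < κ * (a * (a - q)) := mul_lt_mul_of_pos_left (by linarith) hκ
  nlinarith

section Graph

variable {n p : ℕ} (G : OGraph (Fin n) (Fin p))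

lemma incMatrix_sq (i : Fin n) (k : Fin p) :
    G.incMatrix i k ^ 2 = if k ∈ G.incident i then 1 else 0 := by
  simp only [OGraph.incMatrix, OGraph.incident, Matrix.of_apply, Finset.mem_filter,
    Finset.mem_univ, true_and]
  split_ifs <;> simp_all

lemma incMatrix_eq_zero {i : Fin n} {k : Fin p} (h : k ∉ G.incident i) :
    G.incMatrix i k = 0 := by
  have := incMatrix_sq G i k
  simpa [h] using this

lemma mulVec_eq_sum_incident (x : Fin p → ℝ) (i : Fin n) :
    (G.incMatrix *ᵥ x) i = ∑ k ∈ G.incident i, G.incMatrix i k * x k := by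
  rw [Matrix.mulVec, dotProduct]
  exact (Finset.sum_subset (Finset.subset_univ _) fun k _ hk => by
    simp [incMatrix_eq_zero G hk]).symm

lemma sum_incident_sq (x : Fin p → ℝ) (i : Fin n) :
    ∑ k ∈ G.incident i, (G.incMatrix i k * x k) ^ 2 = ∑ k ∈ G.incident i, x k ^ 2 :=
  Finset.sum_congr rfl fun k hk => by rw [mul_pow, incMatrix_sq, if_pos hk, one_mul]

/-- The contribution of one node to the diagonal dominance of `DᵀΨD + Λ`. -/
lemma node_bound_s8 (ν : ℝ) (x : Fin p → ℝ) (i : Fin n) :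
    (ν - (((G.incident i).card : ℝ) - 1) * |ν|) * ∑ k ∈ G.incident i, x k ^ 2
      ≤ ν * (G.incMatrix *ᵥ x) i ^ 2 := by
  rw [mulVec_eq_sum_incident, ← sum_incident_sq]
  have hS : 0 ≤ ∑ k ∈ G.incident i, (G.incMatrix i k * x k) ^ 2 :=
    Finset.sum_nonneg fun k _ => sq_nonneg _
  rcases le_total ν 0 with hν | hν
  · have hcs := sq_sum_le_card_mul_sum_sq (s := G.incident i)
      (f := fun k => G.incMatrix i k * x k)
    rw [abs_of_nonpos hν]
    nlinarith
  · rw [abs_of_nonneg hν]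
    rcases Nat.lt_or_ge (G.incident i).card 2 with hr | hr
    · obtain h0 | h1 : (G.incident i).card = 0 ∨ (G.incident i).card = 1 := by omega
      · rw [Finset.card_eq_zero] at h0
        simp [h0]
      · obtain ⟨k, hk⟩ := Finset.card_eq_one.1 h1
        simp [hk]
    · have hr' : (2 : ℝ) ≤ (G.incident i).card := by exact_mod_cast hr
      have h1 : 0 ≤ ν * (∑ k ∈ G.incident i, G.incMatrix i k * x k) ^ 2 := by positivity
      have h2 : 0 ≤ (((G.incident i).card : ℝ) - 2) * ν :=
        mul_nonneg (by linarith) hν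
      nlinarith [mul_nonneg h2 hS]

lemma sum_incident_eq (c : Fin n → ℝ) (y : Fin p → ℝ) :
    ∑ i, c i * ∑ k ∈ G.incident i, y k = ∑ k, (c (G.pEnd k) + c (G.nEnd k)) * y k := by
  have h : ∀ i, c i * ∑ k ∈ G.incident i, y k
      = ∑ k, ((if G.pEnd k = i then c i * y k else 0)
          + if G.nEnd k = i then c i * y k else 0) := by
    intro i
    rw [OGraph.incident, Finset.sum_filter, Finset.mul_sum]
    refine Finset.sum_congr rfl fun k _ => ?_
    have := G.ends_ne k
    by_cases h1 : G.pEnd k = i <;> by_cases h2 : G.nEnd k = i <;> simp_all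
  simp only [h]
  rw [Finset.sum_comm]
  refine Finset.sum_congr rfl fun k _ => ?_
  rw [Finset.sum_add_distrib]
  simp [add_mul]

lemma quadForm_eq_s8 (ν : Fin n → ℝ) (β x : Fin p → ℝ) :
    x ⬝ᵥ ((G.incMatrixᵀ * Matrix.diagonal ν * G.incMatrix + Matrix.diagonal β) *ᵥ x)
      = ∑ i, ν i * (G.incMatrix *ᵥ x) i ^ 2 + ∑ k, β k * x k ^ 2 := by
  rw [Matrix.add_mulVec, dotProduct_add, ← Matrix.mulVec_mulVec, ← Matrix.mulVec_mulVec,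
    Matrix.dotProduct_mulVec, Matrix.vecMul_transpose]
  congr 1
  · simp only [dotProduct, Matrix.mulVec_diagonal]
    exact Finset.sum_congr rfl fun i _ => by ring
  · simp only [dotProduct, Matrix.mulVec_diagonal]
    exact Finset.sum_congr rfl fun i _ => by ring

lemma quadForm_pos (ν : Fin n → ℝ) (β x : Fin p → ℝ)
    (hedge : ∀ k : Fin p,
      0 < β k + ν (G.pEnd k) + ν (G.nEnd k)
        - (((G.incident (G.pEnd k)).card : ℝ) - 1) * |ν (G.pEnd k)|
        - (((G.incident (G.nEnd k)).card : ℝ) - 1) * |ν (G.nEnd k)|) (hx : x ≠ 0) :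
    0 < x ⬝ᵥ ((G.incMatrixᵀ * Matrix.diagonal ν * G.incMatrix + Matrix.diagonal β) *ᵥ x) := by
  rw [quadForm_eq_s8]
  have h1 := Finset.sum_le_sum fun i (_ : i ∈ Finset.univ) => node_bound_s8 G (ν i) x i
  rw [sum_incident_eq G (fun i => ν i - (((G.incident i).card : ℝ) - 1) * |ν i|)] at h1
  refine lt_of_lt_of_le ?_ (add_le_add_left h1 _)
  rw [← Finset.sum_add_distrib]
  obtain ⟨k, hk⟩ := Function.ne_iff.1 hx
  have hk2 : 0 < x k ^ 2 := by have : x k ≠ 0 := hk; positivity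
  refine Finset.sum_pos' (fun k _ => ?_) ⟨k, Finset.mem_univ _, ?_⟩
  · nlinarith [mul_nonneg (hedge k).le (sq_nonneg (x k))]
  · nlinarith [mul_pos (hedge k) hk2]

end Graph

lemma sector_bounds {φ : ℝ → ℝ} {lo hi : ℝ} (hlo : 0 < lo) (hle : lo ≤ hi) (h0 : φ 0 = 0)
    (hsec : ∀ x : ℝ, x ≠ 0 → lo ≤ φ x / x ∧ φ x / x ≤ hi) (x : ℝ) :
    lo * |x| ≤ |φ x| ∧ |φ x| ≤ hi * |x| ∧ 1 / hi * φ x ^ 2 ≤ φ x * x := by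
  rcases eq_or_ne x 0 with rfl | hx
  · simp [h0]
  obtain ⟨h1, h2⟩ := hsec x hx
  have he : φ x = φ x / x * x := by field_simp
  generalize φ x / x = q at *
  have hq : 0 < q := by linarith
  have hh : 0 < hi := by linarith
  rw [he, abs_mul, abs_of_pos hq]
  refine ⟨by gcongr, by gcongr, ?_⟩
  rw [div_mul_eq_mul_div, div_le_iff₀ hh]
  nlinarith [mul_le_mul_of_nonneg_left h2 (mul_nonneg hq.le (sq_nonneg x))]

/-- The algebraic heart of the dissipation inequality, at a fixed time: with `u = -Dv` and
`v_k z_k ≥ β_k v_k²` for `z = Dᵀ(y + w)`, the form `vᵀ(DᵀΨD + Λ)v` is at most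
`∑ ν_i u_i² - ∑ u_i y_i + v·Dᵀw`. -/
lemma pointwise_dissipation {n p : ℕ} (G : OGraph (Fin n) (Fin p)) (ν y w : Fin n → ℝ)
    (β v : Fin p → ℝ)
    (hv : ∀ k, β k * v k ^ 2 ≤ v k * (G.incMatrixᵀ *ᵥ fun i => y i + w i) k) :
    v ⬝ᵥ ((G.incMatrixᵀ * Matrix.diagonal ν * G.incMatrix + Matrix.diagonal β) *ᵥ v)
      ≤ ∑ i, (ν i * (-(G.incMatrix *ᵥ v)) i ^ 2 - (-(G.incMatrix *ᵥ v)) i * y i)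
        + ∑ k, v k * (G.incMatrixᵀ *ᵥ w) k := by
  have h1 := Finset.sum_le_sum fun k (_ : k ∈ Finset.univ) => hv k
  have h2 : ∑ k, v k * (G.incMatrixᵀ *ᵥ fun i => y i + w i) k
      = ∑ i, (G.incMatrix *ᵥ v) i * y i + ∑ k, v k * (G.incMatrixᵀ *ᵥ w) k := by
    have e : (fun i => y i + w i) = y + w := rfl
    have e2 : ∑ i, (G.incMatrix *ᵥ v) i * y i = v ⬝ᵥ (G.incMatrixᵀ *ᵥ y) := by
      rw [Matrix.dotProduct_mulVec, Matrix.vecMul_transpose]; rfl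
    rw [e2, e, Matrix.mulVec_add]
    exact dotProduct_add _ _ _
  rw [quadForm_eq_s8]
  simp only [Pi.neg_apply, neg_sq, neg_mul, sub_neg_eq_add, Finset.sum_add_distrib]
  linarith

/-- under the IFP and sector-bound hypotheses, the edge conditions
`1/ᾱ_k + ν_i + ν_j - (r_i-1)|ν_i| - (r_j-1)|ν_j| > 0`, with `κ` the smallest eigenvalue of
`DᵀΨD + Λ` (characterised variationally), `δ̄ = ∑ᵢ δᵢ` and `α = min_k α_k`, one has `κ > 0`,
`‖DᵀY‖_T ≤ (1/(κα) + 1)‖DᵀW‖_T + (1/α)√(2|δ̄|/κ)` for all `T ≥ 0`, and in particular the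
network achieves input–output consensus. -/
theorem stmt8 {n p : ℕ} (G : OGraph (Fin n) (Fin p))
    (hconn : G.toSimpleGraph.Connected)
    (φ : Fin p → ℝ → ℝ) (hφm : ∀ k, Measurable (φ k))
    (αlo αhi : Fin p → ℝ) (hαlo : ∀ k, 0 < αlo k) (hle : ∀ k, αlo k ≤ αhi k)
    (hφ0 : ∀ k, φ k 0 = 0)
    (hsec : ∀ k, ∀ x : ℝ, x ≠ 0 → αlo k ≤ φ k x / x ∧ φ k x / x ≤ αhi k)
    (Y W : ℝ → Fin n → ℝ)
    (hYm : ∀ i, Measurable fun t => Y t i) (hWm : ∀ i, Measurable fun t => W t i)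
    (hY2 : ∀ i, ∀ T : ℝ, 0 ≤ T → IntegrableOn (fun t => (Y t i) ^ 2) (Set.Ioc 0 T))
    (hW2 : ∀ i, ∀ T : ℝ, 0 ≤ T → IntegrableOn (fun t => (W t i) ^ 2) (Set.Ioc 0 T))
    (V : ℝ → Fin p → ℝ)
    (hV : ∀ t k, V t k = φ k ((G.incMatrix)ᵀ.mulVec (fun i => Y t i + W t i) k))
    (U : ℝ → Fin n → ℝ)
    (hU : ∀ t, U t = -(G.incMatrix.mulVec (V t)))
    (ν δ : Fin n → ℝ)
    (hIFP : ∀ i, ∀ T : ℝ, 0 ≤ T →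
      ν i * (∫ t in (0:ℝ)..T, (U t i) ^ 2) + δ i ≤ ∫ t in (0:ℝ)..T, U t i * Y t i)
    (hedge : ∀ k : Fin p,
      0 < 1 / αhi k + ν (G.pEnd k) + ν (G.nEnd k)
        - (((G.incident (G.pEnd k)).card : ℝ) - 1) * |ν (G.pEnd k)|
        - (((G.incident (G.nEnd k)).card : ℝ) - 1) * |ν (G.nEnd k)|)
    (M : Matrix (Fin p) (Fin p) ℝ)
    (hM : M = (G.incMatrix)ᵀ * Matrix.diagonal ν * G.incMatrix
        + Matrix.diagonal fun k => 1 / αhi k)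
    (κ : ℝ)
    (hκlo : ∀ x : Fin p → ℝ, κ * (x ⬝ᵥ x) ≤ x ⬝ᵥ (M.mulVec x))
    (hκattained : ∃ x : Fin p → ℝ, x ≠ 0 ∧ x ⬝ᵥ (M.mulVec x) = κ * (x ⬝ᵥ x))
    (δbar αmin : ℝ) (hδbar : δbar = ∑ i, δ i) (hαmin : αmin = sInf (Set.range αlo)) :
    0 < κ ∧
    (∀ T : ℝ, 0 ≤ T →
      normT (fun t => (G.incMatrix)ᵀ.mulVec (Y t)) T
        ≤ (1 / (κ * αmin) + 1) * normT (fun t => (G.incMatrix)ᵀ.mulVec (W t)) T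
          + (1 / αmin) * Real.sqrt (2 * |δbar| / κ)) ∧
    ∃ ρ > (0:ℝ), ∃ σ ≥ (0:ℝ), ∀ T : ℝ, 0 ≤ T →
      normT (fun t => (G.incMatrix)ᵀ.mulVec (Y t)) T
        ≤ ρ * normT (fun t => (G.incMatrix)ᵀ.mulVec (W t)) T + σ := by
  obtain ⟨x₀, hx₀, hx₀κ⟩ := hκattained
  have hκ : 0 < κ := by
    have hpos := quadForm_pos G ν (fun k => 1 / αhi k) x₀ hedge hx₀
    rw [← hM, hx₀κ] at hpos
    have hxx : 0 ≤ x₀ ⬝ᵥ x₀ := Finset.sum_nonneg fun k _ => mul_self_nonneg _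
    exact pos_of_mul_pos_left hpos hxx
  -- an eigenvector exists, so the graph has an edge and the infimum `αmin` is a minimum
  obtain ⟨k₀, -⟩ := Function.ne_iff.1 hx₀
  have : Nonempty (Fin p) := ⟨k₀⟩
  have hα_le : ∀ k, αmin ≤ αlo k := fun k => by
    rw [hαmin]
    exact csInf_le (Set.finite_range αlo).bddBelow ⟨k, rfl⟩
  have hα : 0 < αmin := by
    obtain ⟨k, hk⟩ := (Set.range_nonempty αlo).csInf_mem (Set.finite_range αlo)
    rw [hαmin, ← hk]
    exact hαlo k
  have hs := fun k => sector_bounds (hαlo k) (hle k) (hφ0 k) (hsec k)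
  have main : ∀ T : ℝ, 0 ≤ T →
      normT (fun t => (G.incMatrix)ᵀ.mulVec (Y t)) T
        ≤ (1 / (κ * αmin) + 1) * normT (fun t => (G.incMatrix)ᵀ.mulVec (W t)) T
          + (1 / αmin) * Real.sqrt (2 * |δbar| / κ) := by
    intro T hT
    set μ : Measure ℝ := volume.restrict (Set.Ioc 0 T) with hμ
    have hYL : ∀ i, MemLp (fun t => Y t i) 2 μ := fun i =>
      (memLp_two_iff_integrable_sq (hYm i).aestronglyMeasurable).2 (hY2 i T hT)
    have hWL : ∀ i, MemLp (fun t => W t i) 2 μ := fun i =>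
      (memLp_two_iff_integrable_sq (hWm i).aestronglyMeasurable).2 (hW2 i T hT)
    have hDL : ∀ f : ℝ → Fin n → ℝ, (∀ i, MemLp (fun t => f t i) 2 μ) →
        ∀ k, MemLp (fun t => (G.incMatrixᵀ *ᵥ f t) k) 2 μ := fun f hf k => by
      simp only [Matrix.mulVec, dotProduct]
      exact memLp_finsetSum _ fun i _ => (hf i).const_mul _
    have hDW := hDL W hWL
    have hz := hDL (fun t i => Y t i + W t i) fun i => (hYL i).add (hWL i)
    have hVL : ∀ k, MemLp (fun t => V t k) 2 μ := fun k => by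
      have hm : Measurable fun t => V t k := by
        simp only [hV, Matrix.mulVec, dotProduct]
        exact (hφm k).comp (Finset.measurable_sum _ fun i _ =>
          ((hYm i).add (hWm i)).const_mul _)
      refine (hz k).of_le_mul (c := αhi k) hm.aestronglyMeasurable
        (Filter.Eventually.of_forall fun t => ?_)
      simp only [hV, Real.norm_eq_abs]
      exact (hs k _).2.1
    have hUL : ∀ i, MemLp (fun t => U t i) 2 μ := fun i => by
      simp only [hU, Pi.neg_apply, Matrix.mulVec, dotProduct]
      exact (memLp_finsetSum _ fun k _ => (hVL k).const_mul _).neg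
    have hnorm : ∀ f : ℝ → Fin p → ℝ, normT f T = √(∫ t, ∑ k, f t k ^ 2 ∂μ) := fun f => by
      rw [normT, intervalIntegral.integral_of_le hT]
    have hUY : ∀ i, Integrable (fun t => U t i * Y t i) μ := fun i =>
      (hUL i).integrable_mul (hYL i)
    have hIFP' : ∀ i, ∫ t, (ν i * U t i ^ 2 - U t i * Y t i) ∂μ ≤ -δ i := fun i => by
      have h := hIFP i T hT
      rw [intervalIntegral.integral_of_le hT, intervalIntegral.integral_of_le hT] at h
      rw [integral_sub ((hUL i).integrable_sq.const_mul _) (hUY i),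
        integral_const_mul]
      linarith
    have hint : ∀ i, Integrable (fun t => ν i * U t i ^ 2 - U t i * Y t i) μ := fun i =>
      ((hUL i).integrable_sq.const_mul _).sub (hUY i)
    have hdiss : κ * (∫ t, ∑ k, V t k ^ 2 ∂μ)
        ≤ -δbar + ∫ t, ∑ k, V t k * (G.incMatrixᵀ *ᵥ W t) k ∂μ := by
      have h1 : ∫ t, ∑ i, (ν i * U t i ^ 2 - U t i * Y t i) ∂μ ≤ -δbar := by
        rw [integral_finsetSum _ fun i _ => hint i, hδbar, ← Finset.sum_neg_distrib]
        exact Finset.sum_le_sum fun i _ => hIFP' i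
      refine le_trans ?_ (add_le_add_left h1 _)
      have hI1 := integrable_finsetSum Finset.univ fun i (_ : i ∈ Finset.univ) => hint i
      have hI2 := integrable_sum_mul hVL hDW
      rw [← integral_add hI1 hI2, ← integral_const_mul]
      refine integral_mono ((integrable_sum_sq hVL).const_mul κ) (hI1.add hI2) fun t => ?_
      have h2 := hκlo (V t)
      have h3 := pointwise_dissipation G ν (Y t) (W t) (fun k => 1 / αhi k) (V t) fun k => by
        rw [hV]
        exact (hs k _).2.2
      rw [← hM, ← hU] at h3
      have h4 : V t ⬝ᵥ V t = ∑ k, V t k ^ 2 :=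
        Finset.sum_congr rfl fun k _ => (sq _).symm
      rw [h4] at h2
      exact h2.trans h3
    have hV0 : 0 ≤ ∫ t, ∑ k, V t k ^ 2 ∂μ := integral_nonneg fun t => by positivity
    have hroot : √(∫ t, ∑ k, V t k ^ 2 ∂μ)
        ≤ √(∫ t, ∑ k, (G.incMatrixᵀ *ᵥ W t) k ^ 2 ∂μ) / κ + √(|δbar| / κ) := by
      refine root_bound hκ (Real.sqrt_nonneg _) (abs_nonneg _) ?_
      rw [Real.sq_sqrt hV0]
      have := (abs_le.1 (integral_sum_mul_le hVL hDW)).2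
      linarith [neg_le_abs δbar]
    have hzV : αmin * √(∫ t, ∑ k, (G.incMatrixᵀ *ᵥ fun i => Y t i + W t i) k ^ 2 ∂μ)
        ≤ √(∫ t, ∑ k, V t k ^ 2 ∂μ) := by
      apply Real.le_sqrt_of_sq_le
      rw [mul_pow, Real.sq_sqrt (integral_nonneg fun t => by positivity),
        ← integral_const_mul]
      refine integral_mono ((integrable_sum_sq hz).const_mul _) (integrable_sum_sq hVL)
        fun t => ?_
      simp only [Finset.mul_sum]
      refine Finset.sum_le_sum fun k _ => ?_
      rw [hV, ← mul_pow]
      refine sq_le_sq.2 ?_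
      rw [abs_mul, abs_of_pos hα]
      exact (mul_le_mul_of_nonneg_right (hα_le k) (abs_nonneg _)).trans (hs k _).1
    have htri := sqrt_integral_sub_le hz hDW
    have hsub : ∀ t k, (G.incMatrixᵀ *ᵥ fun i => Y t i + W t i) k - (G.incMatrixᵀ *ᵥ W t) k
        = (G.incMatrixᵀ *ᵥ Y t) k := fun t k => by
      have e : (fun i => Y t i + W t i) = Y t + W t := rfl
      rw [e, Matrix.mulVec_add, Pi.add_apply, add_sub_cancel_right]
    simp only [hsub] at htri
    rw [hnorm, hnorm]
    have hmono : √(|δbar| / κ) ≤ √(2 * |δbar| / κ) := by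
      gcongr
      linarith [abs_nonneg δbar]
    have hzle := (le_div_iff₀' hα).2 (hzV.trans (hroot.trans (add_le_add_right hmono _)))
    refine htri.trans ((add_le_add_left hzle _).trans (le_of_eq ?_))
    field_simp
    ring
  refine ⟨hκ, main, 1 / (κ * αmin) + 1, by positivity, (1 / αmin) * √(2 * |δbar| / κ),
    by positivity, main⟩
end

section
/- Consider two subnetworks: G₁ a finite simple undirected connected graph on nodes {1,…,n} and G₂ a finite simple undirected connected graph on nodes {n+1,…,m}, each with at least one edge, interconnected by a nonempty set E₁₂ of interconnection edges, each joining a node p of G₁ to a node q of G₂, such that for any two distinct interconnection edges (p_r,q_r), (p_s,q_s): p_r ≠ p_s, q_r ≠ q_s, p_r and p_s are non-adjacent in G₁, and q_r and q_s are non-adjacent in G₂. Every edge (i,j) of the interconnected graph G₁₂ carries a Borel measurable coupling φ_{ij} : ℝ → ℝ sector bounded with bounds 0 < α_{ij} ≤ ᾱ_{ij}. Let ν₁,…,ν_m ∈ ℝ and assume: (i) for every edge (i,j) of G₁ or of G₂: 1/ᾱ_{ij} + ν_i + ν_j − (r_i − 1)|ν_i| − (r_j − 1)|ν_j| > 0,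 where r_i is the degree of node i within its own subnetwork; (ii) every boundary node p satisfies ν_p ≠ 0; (iii) for every interconnection edge (p,q) ∈ E₁₂: γ_{pq}(1/ᾱ_{pq} + ν_p + ν_q) − r_p|ν_p| − r_q|ν_q| > 0, where γ_{pq} = min{γ_p, γ_q}, γ_p := min over neighbours j of p in G₁ of [1/ᾱ_{pj} + ν_p + ν_j − (r_p − 1)|ν_p| − (r_j − 1)|ν_j|]/|ν_p|, and γ_q := min over neighbours j of q in G₂ of [1/ᾱ_{qj} + ν_q + ν_j − (r_q − 1)|ν_q| − (r_j − 1)|ν_j|]/|ν_q|. Let D₁₂ be an oriented incidence matrix of G₁₂. Let y_i, w_i : [0,∞) → ℝ (i = 1,…,m) be locally square-integrable, set Y₁₂ = (y₁,…,y_m)ᵀ, W₁₂ = (w₁,…,w_m)ᵀ, define V₁₂(t) by applying the edge couplings componentwise to D₁₂ᵀ(Y₁₂(t)+W₁₂(t)), and define U₁₂(t) = −D₁₂ V₁₂(t) with components u_i. Suppose for every i ∈ {1,…,m} there exists δ_i ∈ ℝ such that for all T ≥ 0: ∫₀ᵀ u_i(t) y_i(t) dt ≥ ν_i ∫₀ᵀ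 u_i(t)² dt + δ_i. Then there exist ρ > 0 and σ ≥ 0 such that ‖D₁₂ᵀ Y₁₂‖_T ≤ ρ ‖D₁₂ᵀ W₁₂‖_T + σ for all T ≥ 0, i.e., the interconnected network achieves input–output consensus. -/
/-!
Write `v` for the vector of edge signals, `z = DᵀY`, `w = DᵀW`, so that `v = φ(z + w)` and
`u = -D v`. Then `∑ uᵢ yᵢ = -v ⬝ z`, and the upper sector bound gives `v ⬝ (z + w) ≥ ∑ vₑ² / ᾱₑ`.
If the quadratic form `∑ vₑ² / ᾱₑ + ∑ νᵢ (D v)ᵢ²` dominates `c |v|²` with `c > 0`, Young's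
inequality on `v ⬝ w` and the lower sector bound turn this into
`|z|² ≤ a |w|² + b (∑ νᵢ uᵢ² - ∑ uᵢ yᵢ)` at every time; integrating and using the passivity
inequalities yields consensus (`consensus_of_posDef`).

Positivity of the form is shown node by node. At a node of subnetwork degree `r`, the subnetwork
part satisfies `ν (∑ ± vₑ)² ≥ (ν - (r - 1)|ν|) ∑ vₑ²` (`weighted_sq_lower`). At a boundary node the
cross terms with the interconnection signal `s` are bounded below by `-|ν| (g vₑ² + s² / g)`
(`node_lower`). Summing over the nodes (`side_bound`), an edge at a boundary node keeps a positive
coefficient when `g < γ`, since by non-adjacency it has only one boundary end, and an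
interconnection edge has coefficient `1/ᾱ + ν_p + ν_q - (r_p|ν_p| + r_q|ν_q|)/g`, which the
interface condition makes positive for `g` close to `γ`.
-/

open Matrix MeasureTheory

/-- Adjacency of two nodes: some edge joins them. -/
def OGraph.Adj {V E : Type*} (G : OGraph V E) (i j : V) : Prop :=
  ∃ e, (G.pEnd e = i ∧ G.nEnd e = j) ∨ (G.pEnd e = j ∧ G.nEnd e = i)

/-- The end node of edge `e` other than `i`. -/
def OGraph.otherEnd {V E : Type*} [DecidableEq V] (G : OGraph V E) (i : V) (e : E) : V :=
  if G.pEnd e = i then G.nEnd e else G.pEnd e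

/-- The oriented incidence matrix of the graph `G₁₂` obtained by interconnecting `G₁` and `G₂`
through `q` interconnection edges: edge `k` of the interconnection joins node `pe k` of `G₁`
(positive end) to node `qe k` of `G₂` (negative end). -/
noncomputable def interIncMatrix {n₁ p₁ n₂ p₂ q : ℕ}
    (G₁ : OGraph (Fin n₁) (Fin p₁)) (G₂ : OGraph (Fin n₂) (Fin p₂))
    (pe : Fin q → Fin n₁) (qe : Fin q → Fin n₂) :
    Matrix (Fin n₁ ⊕ Fin n₂) (Fin p₁ ⊕ (Fin p₂ ⊕ Fin q)) ℝ :=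
  Matrix.of fun i k =>
    match i, k with
    | .inl i, .inl k => G₁.incMatrix i k
    | .inl _, .inr (.inl _) => 0
    | .inl i, .inr (.inr k) => if pe k = i then 1 else 0
    | .inr _, .inl _ => 0
    | .inr i, .inr (.inl k) => G₂.incMatrix i k
    | .inr i, .inr (.inr k) => if qe k = i then -1 else 0

/-! ### Lower bounds at a single node -/

lemma exists_pos_le {ι : Type*} [Finite ι] (m : ι → ℝ) (hm : ∀ e, 0 < m e) :
    ∃ c > (0:ℝ), ∀ e, c ≤ m e := by
  rcases isEmpty_or_nonempty ι with h | h
  · exact ⟨1, one_pos, fun e => (h.false e).elim⟩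
  · obtain ⟨e, he⟩ := Finite.exists_min m
    exact ⟨m e, hm e, he⟩

/-- Lower bound for a weighted square of a signed sum of `r` terms. For `ν < 0` it is the
Cauchy–Schwarz inequality; for `ν ≥ 0` the right-hand side is nonpositive once `r ≥ 2`. -/
lemma weighted_sq_lower {E : Type*} (S : Finset E) (b v : E → ℝ)
    (hb : ∀ e ∈ S, (b e) ^ 2 = 1) (ν : ℝ) :
    (ν - ((S.card : ℝ) - 1) * |ν|) * ∑ e ∈ S, v e ^ 2 ≤ ν * (∑ e ∈ S, b e * v e) ^ 2 := by
  have hq : ∑ e ∈ S, v e ^ 2 = ∑ e ∈ S, (b e * v e) ^ 2 :=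
    Finset.sum_congr rfl fun e he => by rw [mul_pow, hb e he, one_mul]
  have h0 : 0 ≤ ∑ e ∈ S, v e ^ 2 := Finset.sum_nonneg fun e _ => sq_nonneg _
  rcases le_or_gt 0 ν with h | h
  · rw [abs_of_nonneg h]
    have : ν - ((S.card : ℝ) - 1) * ν = ν * (2 - S.card) := by ring
    rw [this, mul_assoc]
    refine mul_le_mul_of_nonneg_left ?_ h
    rcases Nat.lt_or_ge S.card 2 with h2 | h2
    · rcases Nat.lt_or_ge S.card 1 with h1 | h1
      · have : S = ∅ := Finset.card_eq_zero.mp (by omega)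
        simp [this]
      · obtain ⟨e, he⟩ := Finset.card_eq_one.mp (by omega : S.card = 1)
        have hbe := hb e (by simp [he])
        simp only [he, Finset.card_singleton, Finset.sum_singleton, mul_pow, hbe]
        norm_num
    · have h2' : (2:ℝ) ≤ S.card := by exact_mod_cast h2
      nlinarith [sq_nonneg (∑ e ∈ S, b e * v e)]
  · rw [abs_of_neg h, hq]
    have := sq_sum_le_card_mul_sum_sq (s := S) (f := fun e => b e * v e)
    nlinarith

/-- The bound at one node, with an extra input `s` from an interconnection edge; the cross terms
between `s` and the subnetwork edges are split by Young's inequality with weight `g`. At a node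
that is not a boundary node `g = s = 0`, and `x / 0 = 0` makes the extra terms vanish. -/
lemma node_lower {E : Type*} (S : Finset E) (b v : E → ℝ)
    (hb : ∀ e ∈ S, (b e) ^ 2 = 1) (ν s g : ℝ) (hg : 0 < g ∨ (g = 0 ∧ s = 0)) :
    (ν - ((S.card : ℝ) - 1) * |ν| - g * |ν|) * ∑ e ∈ S, v e ^ 2
        + (ν - (S.card : ℝ) * |ν| / g) * s ^ 2
      ≤ ν * ((∑ e ∈ S, b e * v e) + s) ^ 2 := by
  have h1 := weighted_sq_lower S b v hb ν
  rcases hg with hg | ⟨rfl, rfl⟩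
  · have h2 : ∀ e ∈ S, -(|ν| * (g * v e ^ 2 + s ^ 2 / g)) ≤ 2 * ν * s * (b e * v e) := by
      intro e he
      have hs : s ^ 2 / g = g * (s / g) ^ 2 := by field_simp
      have h3 : |2 * s * (b e * v e)| ≤ g * v e ^ 2 + s ^ 2 / g := by
        have hs' : s = g * (s / g) := by field_simp
        rw [hs]
        set r := s / g
        rw [hs', abs_le]
        have hbv : (b e * v e) ^ 2 = v e ^ 2 := by rw [mul_pow, hb e he, one_mul]
        constructor
        · nlinarith [mul_nonneg hg.le (sq_nonneg (b e * v e + r))]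
        · nlinarith [mul_nonneg hg.le (sq_nonneg (b e * v e - r))]
      have h4 : |2 * ν * s * (b e * v e)| = |ν| * |2 * s * (b e * v e)| := by
        rw [← abs_mul]; ring_nf
      have h5 := neg_abs_le (2 * ν * s * (b e * v e))
      rw [h4] at h5
      nlinarith [mul_le_mul_of_nonneg_left h3 (abs_nonneg ν)]
    have h6 := Finset.sum_le_sum h2
    rw [← Finset.mul_sum, Finset.sum_neg_distrib, ← Finset.mul_sum, Finset.sum_add_distrib,
      ← Finset.mul_sum, Finset.sum_const, nsmul_eq_mul] at h6
    have h7 : (S.card : ℝ) * |ν| / g * s ^ 2 = |ν| * (S.card * (s ^ 2 / g)) := by ring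
    nlinarith
  · simpa using h1

/-! ### Incidence sums -/

/-- A sum over all edges weighted by a row of the incidence matrix only sees incident edges. -/
lemma incMatrix_row_sum {N E : Type*} [DecidableEq N] [Fintype E] (G : OGraph N E) (i : N)
    (v : E → ℝ) :
    ∑ e, G.incMatrix i e * v e = ∑ e ∈ G.incident i, G.incMatrix i e * v e := by
  symm
  apply Finset.sum_subset (Finset.subset_univ _)
  intro e _ he
  simp only [OGraph.incident, Finset.mem_filter, Finset.mem_univ, true_and, not_or] at he
  simp [OGraph.incMatrix, he.1, he.2]

lemma incMatrix_sq_s12 {N E : Type*} [DecidableEq N] [Fintype E] (G : OGraph N E) (i : N) (e : E)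
    (he : e ∈ G.incident i) : (G.incMatrix i e) ^ 2 = 1 := by
  simp only [OGraph.incident, Finset.mem_filter, Finset.mem_univ, true_and] at he
  by_cases h : G.pEnd e = i
  · simp [OGraph.incMatrix, h]
  · simp [OGraph.incMatrix, h, he.resolve_left h]

/-- Handshake double counting: each edge is incident to exactly its two ends. -/
lemma sum_incident {N E : Type*} [Fintype N] [DecidableEq N] [Fintype E] (G : OGraph N E)
    (c : N → ℝ) (f : E → ℝ) :
    ∑ i, c i * ∑ e ∈ G.incident i, f e = ∑ e, (c (G.pEnd e) + c (G.nEnd e)) * f e := by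
  have h1 : ∀ i, c i * ∑ e ∈ G.incident i, f e
      = ∑ e, ((if G.pEnd e = i then c i * f e else 0)
          + (if G.nEnd e = i then c i * f e else 0)) := by
    intro i
    rw [OGraph.incident, Finset.sum_filter, Finset.mul_sum]
    refine Finset.sum_congr rfl fun e _ => ?_
    have := G.ends_ne e
    by_cases hp : G.pEnd e = i
    · have hn : G.nEnd e ≠ i := fun h => this (hp.trans h.symm)
      simp [hp, hn]
    · simp [hp]
  simp_rw [h1]
  rw [Finset.sum_comm]
  refine Finset.sum_congr rfl fun e _ => ?_
  rw [Finset.sum_add_distrib]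
  simp [add_mul]

lemma sum_ite_inj {N K : Type*} [Fintype N] [DecidableEq N] [Fintype K]
    (pe : K → N) (hpe : Function.Injective pe) (s : K → ℝ) (k : K) :
    ∑ l, (if pe l = pe k then s l else 0) = s k := by
  classical
  simp [hpe.eq_iff]

lemma sum_ite_notMem {N K : Type*} [DecidableEq N] [Fintype K]
    (pe : K → N) (s : K → ℝ) (i : N) (hi : ∀ k, pe k ≠ i) :
    ∑ l, (if pe l = i then s l else 0) = 0 :=
  Finset.sum_eq_zero fun l _ => by simp [hi l]

lemma sum_sq_inj {N K : Type*} [Fintype N] [DecidableEq N] [Fintype K]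
    (pe : K → N) (hpe : Function.Injective pe) (s : K → ℝ) (c : N → ℝ) :
    ∑ i, c i * (∑ l, (if pe l = i then s l else 0)) ^ 2 = ∑ k, c (pe k) * s k ^ 2 := by
  have h : ∀ i, c i * (∑ l, (if pe l = i then s l else 0)) ^ 2
      = ∑ l, (if pe l = i then c i * s l ^ 2 else 0) := by
    intro i
    by_cases hi : ∃ k, pe k = i
    · obtain ⟨k, rfl⟩ := hi
      rw [sum_ite_inj pe hpe s k]
      have := sum_ite_inj pe hpe (fun l => c (pe k) * s l ^ 2) k
      exact this.symm
    · push Not at hi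
      rw [sum_ite_notMem pe s i hi, sum_ite_notMem pe (fun l => c i * s l ^ 2) i hi]
      simp
  simp_rw [h]
  rw [Finset.sum_comm]
  simp

/-! ### Positivity of the quadratic form on a subnetwork -/

/-- The left-hand side of the subnetwork edge condition for the edge `l`, seen from its end `i`;
`A l` stands for the reciprocal of the upper sector bound. -/
noncomputable def edgeMargin {n p : ℕ} (G : OGraph (Fin n) (Fin p)) (A : Fin p → ℝ)
    (ν : Fin n → ℝ) (i : Fin n) (l : Fin p) : ℝ :=
  A l + ν i + ν (G.otherEnd i l) - (((G.incident i).card : ℝ) - 1) * |ν i|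
    - (((G.incident (G.otherEnd i l)).card : ℝ) - 1) * |ν (G.otherEnd i l)|

lemma edgeMargin_nEnd {n p : ℕ} (G : OGraph (Fin n) (Fin p)) (A : Fin p → ℝ)
    (ν : Fin n → ℝ) (l : Fin p) :
    edgeMargin G A ν (G.nEnd l) l = edgeMargin G A ν (G.pEnd l) l := by
  have h := G.ends_ne l
  simp only [edgeMargin, OGraph.otherEnd, h, if_true, if_false]
  ring

lemma edgeMargin_pos {n p : ℕ} (G : OGraph (Fin n) (Fin p)) (A : Fin p → ℝ)
    (ν : Fin n → ℝ) (hedge : ∀ l, 0 < edgeMargin G A ν (G.pEnd l) l)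
    (i : Fin n) (l : Fin p) (hl : l ∈ G.incident i) : 0 < edgeMargin G A ν i l := by
  simp only [OGraph.incident, Finset.mem_filter, Finset.mem_univ, true_and] at hl
  rcases hl with rfl | rfl
  · exact hedge l
  · rw [edgeMargin_nEnd]; exact hedge l

lemma gamma_pos {n p : ℕ} (G : OGraph (Fin n) (Fin p)) (A : Fin p → ℝ)
    (ν : Fin n → ℝ) (hedge : ∀ l, 0 < edgeMargin G A ν (G.pEnd l) l)
    (i : Fin n) (hν : ν i ≠ 0) (hi : (G.incident i).Nonempty) :
    0 < sInf ((fun l => edgeMargin G A ν i l / |ν i|) '' (G.incident i : Set (Fin p))) := by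
  have hmem := Set.Nonempty.csInf_mem (s := (fun l => edgeMargin G A ν i l / |ν i|) ''
    (G.incident i : Set (Fin p))) (Set.Nonempty.image _ hi) (Set.toFinite _)
  obtain ⟨l, hl, hl'⟩ := hmem
  rw [← hl']
  exact div_pos (edgeMargin_pos G A ν hedge i l hl) (abs_pos.mpr hν)

lemma gamma_mul_le {n p : ℕ} (G : OGraph (Fin n) (Fin p)) (A : Fin p → ℝ)
    (ν : Fin n → ℝ) (i : Fin n) (hν : ν i ≠ 0) (l : Fin p) (hl : l ∈ G.incident i) :
    sInf ((fun l => edgeMargin G A ν i l / |ν i|) '' (G.incident i : Set (Fin p))) * |ν i|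
      ≤ edgeMargin G A ν i l := by
  rw [← le_div_iff₀ (abs_pos.mpr hν)]
  exact csInf_le (Set.toFinite _).bddBelow ⟨l, hl, rfl⟩

/-- Contribution of one subnetwork to the quadratic form. Non-adjacency of the boundary nodes
ensures that each edge pays for at most one interconnection edge, and since the Young weight `g k`
lies below the `γ` of the boundary node, every edge keeps a positive coefficient. -/
lemma side_bound {n p q : ℕ} (G : OGraph (Fin n) (Fin p)) (pe : Fin q → Fin n)
    (hpe : Function.Injective pe) (hadj : ∀ r s, r ≠ s → ¬ G.Adj (pe r) (pe s))
    (A : Fin p → ℝ) (ν : Fin n → ℝ) (hedge : ∀ l, 0 < edgeMargin G A ν (G.pEnd l) l)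
    (hν : ∀ k, ν (pe k) ≠ 0) (g : Fin q → ℝ) (hg : ∀ k, 0 < g k)
    (hgγ : ∀ k, g k < sInf ((fun l => edgeMargin G A ν (pe k) l / |ν (pe k)|) ''
      (G.incident (pe k) : Set (Fin p)))) :
    ∃ m : Fin p → ℝ, (∀ e, 0 < m e) ∧ ∀ (v : Fin p → ℝ) (s : Fin q → ℝ),
      ∑ e, m e * v e ^ 2
        + ∑ k, (ν (pe k) - ((G.incident (pe k)).card : ℝ) * |ν (pe k)| / g k) * s k ^ 2
      ≤ ∑ e, A e * v e ^ 2
        + ∑ i, ν i * ((∑ e, G.incMatrix i e * v e) + ∑ k, (if pe k = i then s k else 0)) ^ 2 := by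
  -- the Young weight as a function of the node, zero away from the boundary
  let h : Fin n → ℝ := fun i => ∑ k, (if pe k = i then g k else 0)
  have hpk : ∀ k, h (pe k) = g k := fun k => sum_ite_inj pe hpe g k
  have hnk : ∀ i, (∀ k, pe k ≠ i) → h i = 0 := fun i hi => sum_ite_notMem pe g i hi
  let c : Fin n → ℝ := fun i => ν i - (((G.incident i).card : ℝ) - 1) * |ν i| - h i * |ν i|
  have hc : ∀ e, A e + (c (G.pEnd e) + c (G.nEnd e)) = edgeMargin G A ν (G.pEnd e) e
      - h (G.pEnd e) * |ν (G.pEnd e)| - h (G.nEnd e) * |ν (G.nEnd e)| := by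
    intro e
    simp only [c, edgeMargin, OGraph.otherEnd, if_true]
    ring
  have key : ∀ k l, l ∈ G.incident (pe k) → g k * |ν (pe k)| < edgeMargin G A ν (pe k) l :=
    fun k l hl => lt_of_lt_of_le (mul_lt_mul_of_pos_right (hgγ k) (abs_pos.mpr (hν k)))
      (gamma_mul_le G A ν (pe k) (hν k) l hl)
  refine ⟨fun e => A e + (c (G.pEnd e) + c (G.nEnd e)), ?_, ?_⟩
  · intro e
    show 0 < A e + (c (G.pEnd e) + c (G.nEnd e))
    rw [hc]
    by_cases hp : ∃ k, pe k = G.pEnd e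
    · obtain ⟨k, hk⟩ := hp
      have hn : ∀ r, pe r ≠ G.nEnd e := by
        intro r hr
        refine hadj k r ?_ ⟨e, Or.inl ⟨hk.symm, hr.symm⟩⟩
        rintro rfl
        exact G.ends_ne e (hk.symm.trans hr)
      have := key k e (by simp [OGraph.incident, hk])
      rw [hnk _ hn, ← hk, hpk]
      linarith
    · push Not at hp
      rw [hnk _ hp]
      by_cases hn : ∃ k, pe k = G.nEnd e
      · obtain ⟨k, hk⟩ := hn
        have := key k e (by simp [OGraph.incident, hk])
        rw [← edgeMargin_nEnd, ← hk, hpk]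
        linarith
      · push Not at hn
        rw [hnk _ hn]
        have := hedge e
        linarith
  · intro v s
    have hnode : ∀ i, c i * ∑ e ∈ G.incident i, v e ^ 2
        + (ν i - ((G.incident i).card : ℝ) * |ν i| / h i)
            * (∑ k, (if pe k = i then s k else 0)) ^ 2
        ≤ ν i * ((∑ e, G.incMatrix i e * v e) + ∑ k, (if pe k = i then s k else 0)) ^ 2 := by
      intro i
      rw [incMatrix_row_sum]
      apply node_lower _ _ _ (fun e he => incMatrix_sq_s12 G i e he)
      by_cases hi : ∃ k, pe k = i
      · obtain ⟨k, rfl⟩ := hi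
        left; rw [hpk]; exact hg k
      · push Not at hi
        exact Or.inr ⟨hnk i hi, sum_ite_notMem pe s i hi⟩
    have hsum := Finset.sum_le_sum fun i (_ : i ∈ Finset.univ) => hnode i
    rw [Finset.sum_add_distrib, sum_incident G c,
      sum_sq_inj pe hpe s (fun i => ν i - ((G.incident i).card : ℝ) * |ν i| / h i)] at hsum
    simp only [hpk] at hsum
    simp only [add_mul (A _), Finset.sum_add_distrib]
    linarith

/-! ### From positivity to input–output consensus -/

/-- Loop argument: if `diag(1/ᾱ) + Dᵀ diag(ν) D` is uniformly positive definite, then the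
passivity inequalities yield an `L²` bound of `DᵀY` by `DᵀW`. All the work is in one pointwise
inequality, which is then integrated over `[0, T]`. -/
lemma consensus_of_posDef {N E : Type*} [Fintype N] [Fintype E] (D : Matrix N E ℝ)
    (φ : E → ℝ → ℝ) (hφm : ∀ e, Measurable (φ e))
    (αlo αhi : E → ℝ)
    (hαlo : ∀ e, 0 < αlo e) (hle : ∀ e, αlo e ≤ αhi e)
    (hφ0 : ∀ e, φ e 0 = 0)
    (hsec : ∀ e, ∀ x : ℝ, x ≠ 0 → αlo e ≤ φ e x / x ∧ φ e x / x ≤ αhi e)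
    (ν : N → ℝ) (c : ℝ) (hc : 0 < c)
    (hQ : ∀ v : E → ℝ, c * ∑ e, v e ^ 2
      ≤ ∑ e, 1 / αhi e * v e ^ 2 + ∑ i, ν i * (D.mulVec v i) ^ 2)
    (Y W : ℝ → N → ℝ)
    (hYm : ∀ i, Measurable fun t => Y t i) (hWm : ∀ i, Measurable fun t => W t i)
    (hY2 : ∀ i, ∀ T : ℝ, 0 ≤ T → IntegrableOn (fun t => (Y t i) ^ 2) (Set.Ioc 0 T))
    (hW2 : ∀ i, ∀ T : ℝ, 0 ≤ T → IntegrableOn (fun t => (W t i) ^ 2) (Set.Ioc 0 T))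
    (V : ℝ → E → ℝ)
    (hV : ∀ t e, V t e = φ e (Dᵀ.mulVec (fun i => Y t i + W t i) e))
    (U : ℝ → N → ℝ) (hU : ∀ t, U t = -(D.mulVec (V t)))
    (δ : N → ℝ)
    (hIFP : ∀ i, ∀ T : ℝ, 0 ≤ T →
      ν i * (∫ t in (0:ℝ)..T, (U t i) ^ 2) + δ i ≤ ∫ t in (0:ℝ)..T, U t i * Y t i) :
    ∃ ρ > (0:ℝ), ∃ σ ≥ (0:ℝ), ∀ T : ℝ, 0 ≤ T →
      normT (fun t => Dᵀ.mulVec (Y t)) T ≤ ρ * normT (fun t => Dᵀ.mulVec (W t)) T + σ := by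
  obtain ⟨a, ha, hale⟩ := exists_pos_le αlo hαlo
  -- sector bounds in product form
  have hlow : ∀ e x, a ^ 2 * x ^ 2 ≤ φ e x ^ 2 := by
    intro e x
    rcases eq_or_ne x 0 with rfl | hx
    · simp [hφ0]
    · obtain ⟨h1, -⟩ := hsec e x hx
      have h2 : φ e x = (φ e x / x) * x := by field_simp
      rw [h2, mul_pow]
      have h3 := (hale e).trans h1
      gcongr
  have hupp : ∀ e x, φ e x ^ 2 ≤ αhi e ^ 2 * x ^ 2 := by
    intro e x
    rcases eq_or_ne x 0 with rfl | hx
    · simp [hφ0]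
    · obtain ⟨h1, h3⟩ := hsec e x hx
      have h2 : φ e x = (φ e x / x) * x := by field_simp
      have h4 := (hαlo e).le.trans h1
      rw [h2, mul_pow]
      gcongr
  have hprod : ∀ e x, 1 / αhi e * φ e x ^ 2 ≤ φ e x * x := by
    intro e x
    have hpos : 0 < αhi e := (hαlo e).trans_le (hle e)
    rcases eq_or_ne x 0 with rfl | hx
    · simp [hφ0]
    · obtain ⟨h1, h3⟩ := hsec e x hx
      have h2 : φ e x = (φ e x / x) * x := by field_simp
      have h4 := (hαlo e).le.trans h1
      rw [one_div, inv_mul_le_iff₀ hpos, h2]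
      set r := φ e x / x
      have : r * x * (r * x) ≤ αhi e * (r * x * x) := by
        nlinarith [mul_nonneg (mul_nonneg h4 (sub_nonneg.mpr h3)) (sq_nonneg x)]
      nlinarith
  have hpt : ∀ t, ∑ e, (Dᵀ.mulVec (Y t) e) ^ 2
      ≤ (2 / (a ^ 2 * c ^ 2) + 2) * ∑ e, (Dᵀ.mulVec (W t) e) ^ 2
        + 4 / (a ^ 2 * c) * (∑ i, ν i * U t i ^ 2 - ∑ i, U t i * Y t i) := by
    intro t
    have hx : ∀ e, Dᵀ.mulVec (fun i => Y t i + W t i) e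
        = Dᵀ.mulVec (Y t) e + Dᵀ.mulVec (W t) e := by
      intro e
      have : (fun i => Y t i + W t i) = Y t + W t := rfl
      rw [this, Matrix.mulVec_add]; rfl
    set z := Dᵀ.mulVec (Y t) with hz
    set w := Dᵀ.mulVec (W t) with hw
    have hVt : ∀ e, V t e = φ e (z e + w e) := fun e => by rw [hV, hx]
    have hUY : ∑ i, U t i * Y t i = -∑ e, V t e * z e := by
      have h1 : ∑ i, U t i * Y t i = U t ⬝ᵥ Y t := rfl
      have h2 : ∑ e, V t e * z e = V t ⬝ᵥ z := rfl
      rw [h1, h2, hU, neg_dotProduct, hz, Matrix.dotProduct_mulVec, Matrix.vecMul_transpose]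
    have hUsq : ∑ i, ν i * U t i ^ 2 = ∑ i, ν i * (D.mulVec (V t) i) ^ 2 := by
      rw [hU]; simp
    have hQt := hQ (V t)
    rw [← hUsq] at hQt
    have h3 : ∑ e, 1 / αhi e * V t e ^ 2 ≤ ∑ e, V t e * z e + ∑ e, V t e * w e := by
      rw [← Finset.sum_add_distrib]
      refine Finset.sum_le_sum fun e _ => ?_
      have := hprod e (z e + w e)
      rw [← hVt] at this
      linarith
    have h4 : ∑ e, V t e * w e ≤ c / 2 * ∑ e, V t e ^ 2 + 1 / (2 * c) * ∑ e, w e ^ 2 := by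
      rw [Finset.mul_sum, Finset.mul_sum, ← Finset.sum_add_distrib]
      refine Finset.sum_le_sum fun e _ => ?_
      have : c / 2 * V t e ^ 2 + 1 / (2 * c) * w e ^ 2 - V t e * w e
          = c / 2 * (V t e - w e / c) ^ 2 := by
        field_simp; ring
      have h5 : 0 ≤ c / 2 * (V t e - w e / c) ^ 2 := by positivity
      linarith
    have h5 : ∑ e, z e ^ 2 ≤ 2 / a ^ 2 * ∑ e, V t e ^ 2 + 2 * ∑ e, w e ^ 2 := by
      rw [Finset.mul_sum, Finset.mul_sum, ← Finset.sum_add_distrib]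
      refine Finset.sum_le_sum fun e _ => ?_
      have h6 := hlow e (z e + w e)
      rw [← hVt] at h6
      have h7 : (z e + w e) ^ 2 ≤ V t e ^ 2 / a ^ 2 := by
        rw [le_div_iff₀ (by positivity)]; linarith
      have h8 : 2 / a ^ 2 * V t e ^ 2 = 2 * (V t e ^ 2 / a ^ 2) := by ring
      rw [h8]
      nlinarith [sq_nonneg (z e + 2 * w e)]
    have h6 : c / 2 * ∑ e, V t e ^ 2 ≤ 1 / (2 * c) * ∑ e, w e ^ 2
        + (∑ i, ν i * U t i ^ 2 - ∑ i, U t i * Y t i) := by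
      rw [hUY]; linarith
    have h7 := mul_le_mul_of_nonneg_left h6 (by positivity : (0:ℝ) ≤ 4 / (a ^ 2 * c))
    have h8 : 4 / (a ^ 2 * c) * (c / 2 * ∑ e, V t e ^ 2) = 2 / a ^ 2 * ∑ e, V t e ^ 2 := by
      field_simp; norm_num
    have h9 : 4 / (a ^ 2 * c) * (1 / (2 * c) * ∑ e, w e ^ 2)
        = 2 / (a ^ 2 * c ^ 2) * ∑ e, w e ^ 2 := by
      field_simp; norm_num
    rw [mul_add, h8, h9] at h7
    linarith
  have hmeasT : ∀ (f : ℝ → N → ℝ), (∀ i, Measurable fun t => f t i) →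
      ∀ e, Measurable fun t => Dᵀ.mulVec (f t) e := by
    intro f hf e
    simp only [Matrix.mulVec, dotProduct]
    exact Finset.measurable_sum _ fun i _ => (hf i).const_mul _
  have hVm : ∀ e, Measurable fun t => V t e := by
    intro e
    simp only [hV]
    exact (hφm e).comp (hmeasT (fun t i => Y t i + W t i) (fun i => (hYm i).add (hWm i)) e)
  have hLT : ∀ (f : ℝ → N → ℝ) (μ : Measure ℝ), (∀ i, MemLp (fun t => f t i) 2 μ) →
      ∀ e, MemLp (fun t => Dᵀ.mulVec (f t) e) 2 μ := by
    intro f μ hf e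
    simp only [Matrix.mulVec, dotProduct]
    exact memLp_finsetSum _ fun i _ => (hf i).const_mul _
  set a₁ := 2 / (a ^ 2 * c ^ 2) + 2 with ha₁
  set b₁ := 4 / (a ^ 2 * c) with hb₁
  have ha₁0 : 0 < a₁ := by positivity
  have hb₁0 : 0 < b₁ := by positivity
  refine ⟨√a₁, Real.sqrt_pos.mpr ha₁0, √(b₁ * |∑ i, δ i|), Real.sqrt_nonneg _, fun T hT => ?_⟩
  have hY : ∀ i, MemLp (fun t => Y t i) 2 (volume.restrict (Set.Ioc 0 T)) := fun i =>
    (memLp_two_iff_integrable_sq (hYm i).aestronglyMeasurable).mpr (hY2 i T hT)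
  have hW : ∀ i, MemLp (fun t => W t i) 2 (volume.restrict (Set.Ioc 0 T)) := fun i =>
    (memLp_two_iff_integrable_sq (hWm i).aestronglyMeasurable).mpr (hW2 i T hT)
  have hVL : ∀ e, MemLp (fun t => V t e) 2 (volume.restrict (Set.Ioc 0 T)) := by
    intro e
    refine MemLp.of_le_mul (c := αhi e)
      (hLT (fun t i => Y t i + W t i) _ (fun i => (hY i).add (hW i)) e)
      (hVm e).aestronglyMeasurable (Filter.Eventually.of_forall fun t => ?_)
    have hpos : 0 < αhi e := (hαlo e).trans_le (hle e)
    rw [hV, Real.norm_eq_abs, Real.norm_eq_abs]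
    apply abs_le_of_sq_le_sq' _ (by positivity) |> abs_le.mpr
    rw [mul_pow, sq_abs]
    exact hupp e _
  have hUL : ∀ i, MemLp (fun t => U t i) 2 (volume.restrict (Set.Ioc 0 T)) := by
    intro i
    simp only [hU, Pi.neg_apply, Matrix.mulVec, dotProduct]
    exact (memLp_finsetSum _ fun e _ => (hVL e).const_mul _).neg
  have iZ : IntervalIntegrable (fun t => ∑ e, (Dᵀ.mulVec (Y t) e) ^ 2) volume 0 T := by
    rw [intervalIntegrable_iff_integrableOn_Ioc_of_le hT]
    exact integrable_finsetSum _ fun e _ => (hLT Y _ hY e).integrable_sq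
  have iW : IntervalIntegrable (fun t => ∑ e, (Dᵀ.mulVec (W t) e) ^ 2) volume 0 T := by
    rw [intervalIntegrable_iff_integrableOn_Ioc_of_le hT]
    exact integrable_finsetSum _ fun e _ => (hLT W _ hW e).integrable_sq
  have iU : ∀ i, IntervalIntegrable (fun t => ν i * U t i ^ 2) volume 0 T := by
    intro i
    rw [intervalIntegrable_iff_integrableOn_Ioc_of_le hT]
    exact (hUL i).integrable_sq.const_mul _
  have iUY : ∀ i, IntervalIntegrable (fun t => U t i * Y t i) volume 0 T := by
    intro i
    rw [intervalIntegrable_iff_integrableOn_Ioc_of_le hT]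
    exact (hUL i).integrable_mul (hY i)
  have iUs : IntervalIntegrable (fun t => ∑ i, ν i * U t i ^ 2) volume 0 T := by
    have := IntervalIntegrable.sum Finset.univ (fun i _ => iU i)
    simpa [Finset.sum_fn] using this
  have iUYs : IntervalIntegrable (fun t => ∑ i, U t i * Y t i) volume 0 T := by
    have := IntervalIntegrable.sum Finset.univ (fun i _ => iUY i)
    simpa [Finset.sum_fn] using this
  have hmono := intervalIntegral.integral_mono_on hT iZ
    ((iW.const_mul a₁).add ((iUs.sub iUYs).const_mul b₁)) (fun t _ => hpt t)
  rw [intervalIntegral.integral_add (iW.const_mul a₁) ((iUs.sub iUYs).const_mul b₁),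
    intervalIntegral.integral_const_mul, intervalIntegral.integral_const_mul,
    intervalIntegral.integral_sub iUs iUYs,
    intervalIntegral.integral_finsetSum (fun i _ => iU i),
    intervalIntegral.integral_finsetSum (fun i _ => iUY i)] at hmono
  simp only [intervalIntegral.integral_const_mul] at hmono
  have hδ : (∑ i, ν i * ∫ t in (0:ℝ)..T, U t i ^ 2) - ∑ i, ∫ t in (0:ℝ)..T, U t i * Y t i
      ≤ |∑ i, δ i| := by
    have h1 := Finset.sum_le_sum fun i (_ : i ∈ Finset.univ) => hIFP i T hT
    rw [Finset.sum_add_distrib] at h1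
    linarith [neg_abs_le (∑ i, δ i)]
  have hfin := hmono.trans (add_le_add le_rfl (mul_le_mul_of_nonneg_left hδ hb₁0.le))
  have hW0 : 0 ≤ ∫ t in (0:ℝ)..T, ∑ e, (Dᵀ.mulVec (W t) e) ^ 2 :=
    intervalIntegral.integral_nonneg hT fun t _ => Finset.sum_nonneg fun e _ => sq_nonneg _
  unfold normT
  rw [← Real.sqrt_mul ha₁0.le]
  refine (Real.sqrt_le_sqrt hfin).trans ?_
  have hA : 0 ≤ a₁ * ∫ t in (0:ℝ)..T, ∑ e, (Dᵀ.mulVec (W t) e) ^ 2 := by positivity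
  have hB : 0 ≤ b₁ * |∑ i, δ i| := by positivity
  rw [Real.sqrt_le_left (by positivity), add_sq, Real.sq_sqrt hA, Real.sq_sqrt hB]
  have := mul_nonneg (Real.sqrt_nonneg (a₁ * ∫ t in (0:ℝ)..T, ∑ e, (Dᵀ.mulVec (W t) e) ^ 2))
    (Real.sqrt_nonneg (b₁ * |∑ i, δ i|))
  linarith

/-! ### The interconnected network -/

/-- Theorem 2: two connected subnetworks of IFP systems, interconnected
through boundary edges with pairwise distinct, pairwise non-adjacent boundary nodes and
sector-bounded couplings, achieve input–output consensus under the within-subnetwork edge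
conditions and the interface conditions on the interconnection edges. -/
theorem stmt12 {n₁ p₁ n₂ p₂ q : ℕ}
    (G₁ : OGraph (Fin n₁) (Fin p₁)) (G₂ : OGraph (Fin n₂) (Fin p₂))
    (hc₁ : G₁.toSimpleGraph.Connected) (hc₂ : G₂.toSimpleGraph.Connected)
    (hp₁ : 0 < p₁) (hp₂ : 0 < p₂) (hq : 0 < q)
    (pe : Fin q → Fin n₁) (qe : Fin q → Fin n₂)
    (hpe : Function.Injective pe) (hqe : Function.Injective qe)
    (hpadj : ∀ r s, r ≠ s → ¬ G₁.Adj (pe r) (pe s))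
    (hqadj : ∀ r s, r ≠ s → ¬ G₂.Adj (qe r) (qe s))
    (φ : Fin p₁ ⊕ (Fin p₂ ⊕ Fin q) → ℝ → ℝ) (hφm : ∀ e, Measurable (φ e))
    (αlo αhi : Fin p₁ ⊕ (Fin p₂ ⊕ Fin q) → ℝ)
    (hαlo : ∀ e, 0 < αlo e) (hle : ∀ e, αlo e ≤ αhi e)
    (hφ0 : ∀ e, φ e 0 = 0)
    (hsec : ∀ e, ∀ x : ℝ, x ≠ 0 → αlo e ≤ φ e x / x ∧ φ e x / x ≤ αhi e)
    (ν₁ : Fin n₁ → ℝ) (ν₂ : Fin n₂ → ℝ)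
    (hedge₁ : ∀ k : Fin p₁,
      0 < 1 / αhi (Sum.inl k) + ν₁ (G₁.pEnd k) + ν₁ (G₁.nEnd k)
        - (((G₁.incident (G₁.pEnd k)).card : ℝ) - 1) * |ν₁ (G₁.pEnd k)|
        - (((G₁.incident (G₁.nEnd k)).card : ℝ) - 1) * |ν₁ (G₁.nEnd k)|)
    (hedge₂ : ∀ k : Fin p₂,
      0 < 1 / αhi (Sum.inr (Sum.inl k)) + ν₂ (G₂.pEnd k) + ν₂ (G₂.nEnd k)
        - (((G₂.incident (G₂.pEnd k)).card : ℝ) - 1) * |ν₂ (G₂.pEnd k)|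
        - (((G₂.incident (G₂.nEnd k)).card : ℝ) - 1) * |ν₂ (G₂.nEnd k)|)
    (hbd₁ : ∀ k : Fin q, ν₁ (pe k) ≠ 0 ∧ (G₁.incident (pe k)).Nonempty)
    (hbd₂ : ∀ k : Fin q, ν₂ (qe k) ≠ 0 ∧ (G₂.incident (qe k)).Nonempty)
    (γp γq : Fin q → ℝ)
    (hγp : ∀ k, γp k = sInf ((fun l =>
        (1 / αhi (Sum.inl l) + ν₁ (pe k) + ν₁ (G₁.otherEnd (pe k) l)
          - (((G₁.incident (pe k)).card : ℝ) - 1) * |ν₁ (pe k)|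
          - (((G₁.incident (G₁.otherEnd (pe k) l)).card : ℝ) - 1)
              * |ν₁ (G₁.otherEnd (pe k) l)|) / |ν₁ (pe k)|) '' ↑(G₁.incident (pe k))))
    (hγq : ∀ k, γq k = sInf ((fun l =>
        (1 / αhi (Sum.inr (Sum.inl l)) + ν₂ (qe k) + ν₂ (G₂.otherEnd (qe k) l)
          - (((G₂.incident (qe k)).card : ℝ) - 1) * |ν₂ (qe k)|
          - (((G₂.incident (G₂.otherEnd (qe k) l)).card : ℝ) - 1)
              * |ν₂ (G₂.otherEnd (qe k) l)|) / |ν₂ (qe k)|) '' ↑(G₂.incident (qe k))))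
    (hint : ∀ k : Fin q,
      0 < min (γp k) (γq k) * (1 / αhi (Sum.inr (Sum.inr k)) + ν₁ (pe k) + ν₂ (qe k))
        - ((G₁.incident (pe k)).card : ℝ) * |ν₁ (pe k)|
        - ((G₂.incident (qe k)).card : ℝ) * |ν₂ (qe k)|)
    (Y W : ℝ → (Fin n₁ ⊕ Fin n₂) → ℝ)
    (hYm : ∀ i, Measurable fun t => Y t i) (hWm : ∀ i, Measurable fun t => W t i)
    (hY2 : ∀ i, ∀ T : ℝ, 0 ≤ T → IntegrableOn (fun t => (Y t i) ^ 2) (Set.Ioc 0 T))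
    (hW2 : ∀ i, ∀ T : ℝ, 0 ≤ T → IntegrableOn (fun t => (W t i) ^ 2) (Set.Ioc 0 T))
    (V : ℝ → (Fin p₁ ⊕ (Fin p₂ ⊕ Fin q)) → ℝ)
    (hV : ∀ t e, V t e = φ e
        ((interIncMatrix G₁ G₂ pe qe)ᵀ.mulVec (fun i => Y t i + W t i) e))
    (U : ℝ → (Fin n₁ ⊕ Fin n₂) → ℝ)
    (hU : ∀ t, U t = -((interIncMatrix G₁ G₂ pe qe).mulVec (V t)))
    (δ : (Fin n₁ ⊕ Fin n₂) → ℝ)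
    (hIFP : ∀ i : Fin n₁ ⊕ Fin n₂, ∀ T : ℝ, 0 ≤ T →
      Sum.elim ν₁ ν₂ i * (∫ t in (0:ℝ)..T, (U t i) ^ 2) + δ i
        ≤ ∫ t in (0:ℝ)..T, U t i * Y t i) :
    ∃ ρ > (0:ℝ), ∃ σ ≥ (0:ℝ), ∀ T : ℝ, 0 ≤ T →
      normT (fun t => (interIncMatrix G₁ G₂ pe qe)ᵀ.mulVec (Y t)) T
        ≤ ρ * normT (fun t => (interIncMatrix G₁ G₂ pe qe)ᵀ.mulVec (W t)) T + σ := by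
  have hm₁ : ∀ l, 0 < edgeMargin G₁ (fun l => 1 / αhi (Sum.inl l)) ν₁ (G₁.pEnd l) l := by
    intro l
    simpa [edgeMargin, OGraph.otherEnd] using hedge₁ l
  have hm₂ : ∀ l, 0 < edgeMargin G₂ (fun l => 1 / αhi (Sum.inr (Sum.inl l))) ν₂ (G₂.pEnd l) l := by
    intro l
    simpa [edgeMargin, OGraph.otherEnd] using hedge₂ l
  -- a Young weight strictly between the interface threshold and `min γ_p γ_q`
  have hw : ∀ k, ∃ g : ℝ, 0 < g ∧ g < γp k ∧ g < γq k ∧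
      0 < 1 / αhi (Sum.inr (Sum.inr k)) + ν₁ (pe k) + ν₂ (qe k)
        - ((G₁.incident (pe k)).card : ℝ) * |ν₁ (pe k)| / g
        - ((G₂.incident (qe k)).card : ℝ) * |ν₂ (qe k)| / g := by
    intro k
    have hk := hint k
    have h1 : 0 < γp k := by
      rw [hγp k]
      exact gamma_pos G₁ (fun l => 1 / αhi (Sum.inl l)) ν₁ hm₁ (pe k) (hbd₁ k).1 (hbd₁ k).2
    have h2 : 0 < γq k := by
      rw [hγq k]
      exact gamma_pos G₂ (fun l => 1 / αhi (Sum.inr (Sum.inl l))) ν₂ hm₂ (qe k)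
        (hbd₂ k).1 (hbd₂ k).2
    have h3 : 0 < min (γp k) (γq k) := lt_min h1 h2
    have hR1 : 0 ≤ ((G₁.incident (pe k)).card : ℝ) * |ν₁ (pe k)| := by positivity
    have hR2 : 0 ≤ ((G₂.incident (qe k)).card : ℝ) * |ν₂ (qe k)| := by positivity
    set γ := min (γp k) (γq k) with hγ
    set S := 1 / αhi (Sum.inr (Sum.inr k)) + ν₁ (pe k) + ν₂ (qe k)
    set R1 := ((G₁.incident (pe k)).card : ℝ) * |ν₁ (pe k)|
    set R2 := ((G₂.incident (qe k)).card : ℝ) * |ν₂ (qe k)|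
    have hS : 0 < S := by
      by_contra hS
      nlinarith
    have hlt : (R1 + R2) / S < γ := by
      rw [div_lt_iff₀ hS]; linarith
    obtain ⟨g, hg1, hg2⟩ := exists_between hlt
    have hg0 : 0 < g := lt_of_le_of_lt (by positivity) hg1
    refine ⟨g, hg0, hg2.trans_le (min_le_left _ _), hg2.trans_le (min_le_right _ _), ?_⟩
    rw [div_lt_iff₀ hS] at hg1
    have : (R1 + R2) / g < S := by
      rw [div_lt_iff₀ hg0]; linarith
    rw [add_div] at this
    linarith
  choose g hg0 hgp hgq hgS using hw
  obtain ⟨m₁, hm₁0, hb₁⟩ := side_bound G₁ pe hpe hpadj (fun l => 1 / αhi (Sum.inl l)) ν₁ hm₁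
    (fun k => (hbd₁ k).1) g hg0 (fun k => (hgp k).trans_eq (hγp k))
  obtain ⟨m₂, hm₂0, hb₂⟩ := side_bound G₂ qe hqe hqadj (fun l => 1 / αhi (Sum.inr (Sum.inl l)))
    ν₂ hm₂ (fun k => (hbd₂ k).1) g hg0 (fun k => (hgq k).trans_eq (hγq k))
  obtain ⟨c₁, hc₁0, hc₁'⟩ := exists_pos_le m₁ hm₁0
  obtain ⟨c₂, hc₂0, hc₂'⟩ := exists_pos_le m₂ hm₂0
  obtain ⟨c₃, hc₃0, hc₃'⟩ := exists_pos_le _ hgS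
  refine consensus_of_posDef (interIncMatrix G₁ G₂ pe qe) φ hφm αlo αhi hαlo hle hφ0 hsec
    (Sum.elim ν₁ ν₂) (min c₁ (min c₂ c₃)) (lt_min hc₁0 (lt_min hc₂0 hc₃0)) ?_
    Y W hYm hWm hY2 hW2 V hV U hU δ hIFP
  intro v
  have e₁ : ∀ i, (interIncMatrix G₁ G₂ pe qe).mulVec v (Sum.inl i)
      = (∑ e, G₁.incMatrix i e * v (Sum.inl e))
        + ∑ k, (if pe k = i then v (Sum.inr (Sum.inr k)) else 0) := by
    intro i
    simp [Matrix.mulVec, dotProduct, interIncMatrix]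
  -- interconnection edges enter the second subnetwork with sign `-1`
  have e₂ : ∀ i, (interIncMatrix G₁ G₂ pe qe).mulVec v (Sum.inr i)
      = (∑ e, G₂.incMatrix i e * v (Sum.inr (Sum.inl e)))
        + ∑ k, (if qe k = i then -v (Sum.inr (Sum.inr k)) else 0) := by
    intro i
    simp [Matrix.mulVec, dotProduct, interIncMatrix]
  have q₁ := hb₁ (fun e => v (Sum.inl e)) (fun k => v (Sum.inr (Sum.inr k)))
  have q₂ := hb₂ (fun e => v (Sum.inr (Sum.inl e))) (fun k => -v (Sum.inr (Sum.inr k)))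
  simp only [neg_sq] at q₂
  simp only [Fintype.sum_sum_type, Sum.elim_inl, Sum.elim_inr, e₁, e₂]
  have s₁ : min c₁ (min c₂ c₃) * ∑ e, v (Sum.inl e) ^ 2 ≤ ∑ e, m₁ e * v (Sum.inl e) ^ 2 := by
    rw [Finset.mul_sum]
    exact Finset.sum_le_sum fun e _ =>
      mul_le_mul_of_nonneg_right ((min_le_left _ _).trans (hc₁' e)) (sq_nonneg _)
  have s₂ : min c₁ (min c₂ c₃) * ∑ e, v (Sum.inr (Sum.inl e)) ^ 2
      ≤ ∑ e, m₂ e * v (Sum.inr (Sum.inl e)) ^ 2 := by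
    rw [Finset.mul_sum]
    exact Finset.sum_le_sum fun e _ => mul_le_mul_of_nonneg_right
      (((min_le_right _ _).trans (min_le_left _ _)).trans (hc₂' e)) (sq_nonneg _)
  have s₃ : min c₁ (min c₂ c₃) * ∑ k, v (Sum.inr (Sum.inr k)) ^ 2
      ≤ ∑ k, 1 / αhi (Sum.inr (Sum.inr k)) * v (Sum.inr (Sum.inr k)) ^ 2
        + ∑ k, (ν₁ (pe k) - ((G₁.incident (pe k)).card : ℝ) * |ν₁ (pe k)| / g k)
            * v (Sum.inr (Sum.inr k)) ^ 2
        + ∑ k, (ν₂ (qe k) - ((G₂.incident (qe k)).card : ℝ) * |ν₂ (qe k)| / g k)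
            * v (Sum.inr (Sum.inr k)) ^ 2 := by
    rw [Finset.mul_sum, ← Finset.sum_add_distrib, ← Finset.sum_add_distrib]
    refine Finset.sum_le_sum fun k _ => ?_
    rw [← add_mul, ← add_mul]
    refine mul_le_mul_of_nonneg_right ?_ (sq_nonneg _)
    have := ((min_le_right c₁ _).trans (min_le_right c₂ c₃)).trans (hc₃' k)
    linarith
  linarith
end

section
/- Let G be a finite simple undirected graph on node set {1,…,n} with edge set of cardinality p, let D ∈ ℝ^{n×p} be an oriented incidence matrix of G, and let Ψ = diag(ν₁,…,νₙ) with ν_i ∈ ℝ. Fix an edge k with positive end node i and negative end node j, and let r_i, r_j be the degrees of nodes i and j in G. Then the k-th diagonal entry of DᵀΨD equals ν_i + ν_j, and the sum of the absolute values of the off-diagonal entries in the k-th row of DᵀΨD equals (r_i − 1)|ν_i| + (r_j − 1)|ν_j|. Consequently, if for every edge k (with end nodes i, j and a constant ᾱ_k > 0) the inequality 1/ᾱ_k + ν_i + ν_j > (r_i − 1)|ν_i| + (r_j − 1)|ν_j| holds, then every Gershgorin disc of the symmetric matrix DᵀΨD + diag(1/ᾱ₁,…,1/ᾱ_p) lies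 in the open right half-plane, and this matrix is positive definite. -/
/-!
Row `k` of `D` transposed has only two nonzero entries, `+1` at the positive end `i` and `-1` at the
negative end `j`, so `(DᵀΨD) k l = ν i * D i l - ν j * D j l` (`OGraph.gram_apply`). In a simple
graph no edge `l ≠ k` is incident to both `i` and `j`, so at most one of the two terms is nonzero
and the absolute value splits (`OGraph.abs_gram_apply`). Summing over `l ≠ k` counts the edges
other than `k` at each end, which gives the Gershgorin radius (`OGraph.sum_abs_gram`).

Adding a diagonal matrix leaves the radii unchanged, so the hypothesis says that each disc has
radius smaller than its positive centre. The matrix is symmetric, hence by Gershgorin's theorem its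
eigenvalues are positive and it is positive definite (`posDef_of_sum_abs_lt_diag`).
-/

open Matrix

namespace OGraph

variable {V E : Type*} [DecidableEq V] (G : OGraph V E)

theorem gram_apply [Fintype V] (ν : V → ℝ) (k l : E) :
    (G.incMatrixᵀ * Matrix.diagonal ν * G.incMatrix) k l =
      ν (G.pEnd k) * G.incMatrix (G.pEnd k) l - ν (G.nEnd k) * G.incMatrix (G.nEnd k) l := by
  have hcol : ∀ i, G.incMatrix i k =
      (if G.pEnd k = i then 1 else 0) - (if G.nEnd k = i then 1 else 0) := by
    intro i
    have := G.ends_ne k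
    simp only [incMatrix, Matrix.of_apply]
    split_ifs with h1 h2 <;> simp_all
  simp only [Matrix.mul_apply (M := G.incMatrixᵀ * Matrix.diagonal ν), Matrix.mul_diagonal,
    Matrix.transpose_apply, hcol, sub_mul, ite_mul, one_mul, zero_mul, Finset.sum_sub_distrib,
    Finset.sum_ite_eq, Finset.mem_univ, if_true]

theorem abs_incMatrix_s14 (i : V) (l : E) :
    |G.incMatrix i l| = if G.pEnd l = i ∨ G.nEnd l = i then 1 else 0 := by
  simp only [incMatrix, Matrix.of_apply]
  split_ifs <;> simp_all

theorem gram_diag [Fintype V] (ν : V → ℝ) (k : E) :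
    (G.incMatrixᵀ * Matrix.diagonal ν * G.incMatrix) k k = ν (G.pEnd k) + ν (G.nEnd k) := by
  rw [gram_apply]
  simp [incMatrix, G.ends_ne k]

/-- An edge `l ≠ k` meets at most one end of `k`, so no cancellation can occur in
the off-diagonal entry `(k, l)`. -/
theorem abs_gram_apply [Fintype V] (ν : V → ℝ) {k l : E} (hlk : l ≠ k) :
    |(G.incMatrixᵀ * Matrix.diagonal ν * G.incMatrix) k l| =
      (if G.pEnd l = G.pEnd k ∨ G.nEnd l = G.pEnd k then 1 else 0) * |ν (G.pEnd k)| +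
        (if G.pEnd l = G.nEnd k ∨ G.nEnd l = G.nEnd k then 1 else 0) * |ν (G.nEnd k)| := by
  have hnot : ¬ ((G.pEnd l = G.pEnd k ∨ G.nEnd l = G.pEnd k) ∧
      (G.pEnd l = G.nEnd k ∨ G.nEnd l = G.nEnd k)) := by
    have h1 := G.simple l k hlk
    have h2 := G.ends_ne k
    rintro ⟨h | h, h' | h'⟩
    · exact h2 (h.symm.trans h')
    · exact h1 (by rw [h, h'])
    · exact h1 (by rw [h, h', Set.pair_comm])
    · exact h2 (h.symm.trans h')
  have hzero : G.incMatrix (G.pEnd k) l = 0 ∨ G.incMatrix (G.nEnd k) l = 0 := by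
    rw [← abs_eq_zero, ← abs_eq_zero (a := G.incMatrix (G.nEnd k) l), abs_incMatrix_s14, abs_incMatrix_s14]
    split_ifs <;> simp_all
  rw [gram_apply, ← abs_incMatrix_s14, ← abs_incMatrix_s14]
  rcases hzero with h | h <;> simp [h, abs_mul, mul_comm]

theorem sum_incident_erase [Fintype E] [DecidableEq E] {i : V} {k : E}
    (hk : G.pEnd k = i ∨ G.nEnd k = i) :
    ∑ l ∈ Finset.univ.erase k, (if G.pEnd l = i ∨ G.nEnd l = i then (1 : ℝ) else 0) =
      ((G.incident i).card : ℝ) - 1 := by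
  rw [Finset.sum_erase_eq_sub (Finset.mem_univ k), if_pos hk, Finset.sum_boole]
  rfl

theorem sum_abs_gram [Fintype V] [Fintype E] [DecidableEq E] (ν : V → ℝ) (k : E) :
    ∑ l ∈ Finset.univ.erase k, |(G.incMatrixᵀ * Matrix.diagonal ν * G.incMatrix) k l| =
      (((G.incident (G.pEnd k)).card : ℝ) - 1) * |ν (G.pEnd k)| +
        (((G.incident (G.nEnd k)).card : ℝ) - 1) * |ν (G.nEnd k)| := by
  rw [Finset.sum_congr rfl fun l hl => G.abs_gram_apply ν (Finset.ne_of_mem_erase hl),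
    Finset.sum_add_distrib, ← Finset.sum_mul, ← Finset.sum_mul,
    G.sum_incident_erase (Or.inl rfl), G.sum_incident_erase (Or.inr rfl)]

end OGraph

/-- A real symmetric, strictly diagonally dominant matrix with positive diagonal is
positive definite. -/
theorem posDef_of_sum_abs_lt_diag {ι : Type*} [Fintype ι] [DecidableEq ι] {A : Matrix ι ι ℝ}
    (hA : A.IsHermitian) (h : ∀ k, ∑ l ∈ Finset.univ.erase k, |A k l| < A k k) : A.PosDef := by
  rw [hA.posDef_iff_eigenvalues_pos]
  intro i
  have hev : Module.End.HasEigenvalue (Matrix.toLin' A) (hA.eigenvalues i) := by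
    refine Module.End.hasEigenvalue_of_hasEigenvector (x := (hA.eigenvectorBasis i).ofLp) ⟨?_, ?_⟩
    · rw [Module.End.mem_eigenspace_iff, Matrix.toLin'_apply, hA.mulVec_eigenvectorBasis]
    · simpa using hA.eigenvectorBasis.orthonormal.ne_zero i
  obtain ⟨k, hk⟩ := eigenvalue_mem_ball hev
  simp only [Metric.mem_closedBall, Real.dist_eq, Real.norm_eq_abs] at hk
  linarith [h k, (abs_le.mp hk).1]

/-- for an edge `k` with positive end `i = pEnd k` and negative end
`j = nEnd k`, the `k`-th diagonal entry of `DᵀΨD` equals `ν_i + ν_j`, and the absolute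
off-diagonal row sum equals `(r_i - 1)|ν_i| + (r_j - 1)|ν_j|`. Consequently, if for every
edge `1/ᾱ_k + ν_i + ν_j > (r_i - 1)|ν_i| + (r_j - 1)|ν_j|`, then every Gershgorin disc of
`M = DᵀΨD + diag(1/ᾱ)` lies in the open right half-plane and `M` is positive definite. -/
theorem stmt14 {n p : ℕ} (G : OGraph (Fin n) (Fin p))
    (ν : Fin n → ℝ) (αhi : Fin p → ℝ) (hαhi : ∀ k, 0 < αhi k) (k : Fin p) :
    let N := (G.incMatrix)ᵀ * Matrix.diagonal ν * G.incMatrix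
    let M := N + Matrix.diagonal fun e => 1 / αhi e
    N k k = ν (G.pEnd k) + ν (G.nEnd k) ∧
    ∑ l ∈ Finset.univ.erase k, |N k l| =
      (((G.incident (G.pEnd k)).card : ℝ) - 1) * |ν (G.pEnd k)| +
        (((G.incident (G.nEnd k)).card : ℝ) - 1) * |ν (G.nEnd k)| ∧
    ((∀ k' : Fin p,
        (((G.incident (G.pEnd k')).card : ℝ) - 1) * |ν (G.pEnd k')| +
          (((G.incident (G.nEnd k')).card : ℝ) - 1) * |ν (G.nEnd k')| <
        1 / αhi k' + ν (G.pEnd k') + ν (G.nEnd k')) →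
      (∀ k' : Fin p, ∀ z : ℂ,
        ‖z - (M k' k' : ℂ)‖ ≤ ∑ l ∈ Finset.univ.erase k', |M k' l| → 0 < z.re) ∧
      (∀ x : Fin p → ℝ, x ≠ 0 → 0 < x ⬝ᵥ (M.mulVec x))) := by
  intro N M
  refine ⟨G.gram_diag ν k, G.sum_abs_gram ν k, fun h => ?_⟩
  have hrad : ∀ k', ∑ l ∈ Finset.univ.erase k', |M k' l| < M k' k' := by
    intro k'
    have hoff : ∑ l ∈ Finset.univ.erase k', |M k' l| = ∑ l ∈ Finset.univ.erase k', |N k' l| := by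
      refine Finset.sum_congr rfl fun l hl => ?_
      simp [M, Matrix.diagonal_apply_ne' _ (Finset.ne_of_mem_erase hl)]
    have hdiag : M k' k' = ν (G.pEnd k') + ν (G.nEnd k') + 1 / αhi k' := by
      rw [← G.gram_diag ν k']
      simp [M, N]
    rw [hoff, hdiag, G.sum_abs_gram ν k']
    linarith [h k']
  refine ⟨fun k' z hz => ?_, fun x hx => ?_⟩
  · have hre := (Complex.abs_re_le_norm (z - (M k' k' : ℂ))).trans hz
    rw [Complex.sub_re, Complex.ofReal_re] at hre
    linarith [(abs_le.mp hre).1, hrad k']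
  · have hM : M.IsHermitian := by
      rw [Matrix.IsHermitian, Matrix.conjTranspose_eq_transpose_of_trivial]
      simp [M, N, Matrix.transpose_mul, Matrix.mul_assoc]
    simpa using (posDef_of_sum_abs_lt_diag hM hrad).dotProduct_mulVec_pos hx
end
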